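/- Let G be a finite group. Every 2-maximal subgroup of G is K-𝔘-subnormal in G if and only if G is either supersoluble or an SDH-group. -/

import Mathlib

open Subgroup

/-- A finite group is supersoluble if it has a normal series, all of whose terms are
normal in the whole group, with cyclic factors. -/
def IsSupersoluble (G : Type*) [Group G] : Prop :=
  ∃ (n : ℕ) (c : Fin (n + 1) → Subgroup G) (hc : ∀ i, (c i).Normal),
    c 0 = ⊥ ∧ c (Fin.last n) = ⊤ ∧
    ∀ i : Fin n, c i.castSucc ≤ c i.succ ∧
      haveI := (hc i.castSucc).subgroupOf (c i.succ)
      IsCyclic (↥(c i.succ) ⧸ ((c i.castSucc).subgroupOf (c i.succ)))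

/-- `H` is a maximal subgroup of `K`, where `H ≤ K` are subgroups of a common group. -/
def IsMaximalIn {G : Type*} [Group G] (H K : Subgroup G) : Prop :=
  H ≤ K ∧ IsCoatom (H.subgroupOf K)

/-- The `n`-maximal subgroups of `G`: `0`-maximal is `G` itself, and an `(n+1)`-maximal
subgroup is a maximal subgroup of some `n`-maximal subgroup. -/
def IsNMaximal {G : Type*} [Group G] : ℕ → Subgroup G → Prop
  | 0, H => H = ⊤
  | n + 1, H => ∃ K : Subgroup G, IsNMaximal n K ∧ IsMaximalIn H K

/-- `H` is `K`-`𝔘`-subnormal in `K`: there is a chain of subgroups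
`H = H₀ ≤ H₁ ≤ ⋯ ≤ Hₜ = K` such that at each step either `H_{i-1}` is normal in `H_i`
or `H_i` modulo the core of `H_{i-1}` in `H_i` is supersoluble. -/
def IsKUSubnormalIn {G : Type*} [Group G] (H K : Subgroup G) : Prop :=
  ∃ (n : ℕ) (c : Fin (n + 1) → Subgroup G),
    c 0 = H ∧ c (Fin.last n) = K ∧
    ∀ i : Fin n, c i.castSucc ≤ c i.succ ∧
      (((c i.castSucc).subgroupOf (c i.succ)).Normal ∨
        IsSupersoluble (↥(c i.succ) ⧸ ((c i.castSucc).subgroupOf (c i.succ)).normalCore))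

/-- `H` is `K`-`𝔘`-subnormal in `G`. -/
def IsKUSubnormal {G : Type*} [Group G] (H : Subgroup G) : Prop :=
  IsKUSubnormalIn H ⊤

/-- `H` is `𝔘`-subnormal in `G`: there is a chain of subgroups
`H = H₀ ≤ H₁ ≤ ⋯ ≤ Hₙ = G` with `H_i` modulo the core of `H_{i-1}` in `H_i`
supersoluble at each step. -/
def IsUSubnormal {G : Type*} [Group G] (H : Subgroup G) : Prop :=
  ∃ (n : ℕ) (c : Fin (n + 1) → Subgroup G),
    c 0 = H ∧ c (Fin.last n) = ⊤ ∧
    ∀ i : Fin n, c i.castSucc ≤ c i.succ ∧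
      IsSupersoluble (↥(c i.succ) ⧸ ((c i.castSucc).subgroupOf (c i.succ)).normalCore)

/-- The supersoluble residual `G^𝔘` of `G`: the intersection of all normal subgroups `N`
of `G` with `G/N` supersoluble. -/
def ssResidual (G : Type*) [Group G] : Subgroup G :=
  ⨅ N ∈ {N : Subgroup G | ∃ hN : N.Normal, haveI := hN; IsSupersoluble (G ⧸ N)}, N

/-- `N` is a minimal normal subgroup of `G`. -/
def IsMinimalNormal {G : Type*} [Group G] (N : Subgroup G) : Prop :=
  N.Normal ∧ N ≠ ⊥ ∧ ∀ M : Subgroup G, M.Normal → M ≤ N → M ≠ ⊥ → M = N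

/-- `G` is minimal nonsupersoluble: not supersoluble, but all proper subgroups are. -/
def IsMinimalNonsupersoluble (G : Type*) [Group G] : Prop :=
  ¬ IsSupersoluble G ∧ ∀ H : Subgroup G, H ≠ ⊤ → IsSupersoluble H

/-- `G` is an `SDH`-group: minimal nonsupersoluble with `G^𝔘` a minimal normal subgroup. -/
def IsSDH (G : Type*) [Group G] : Prop :=
  IsMinimalNonsupersoluble G ∧ IsMinimalNormal (ssResidual G)

/-- `H` is a Sylow `p`-subgroup of its ambient (finite) group. -/
def IsSylowSubgroup {G : Type*} [Group G] (p : ℕ) (H : Subgroup G) : Prop :=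
  IsPGroup p H ∧ ¬ p ∣ H.index

/-- A finite group is Ore dispersive if, enumerating the prime divisors of `|G|`
in decreasing order as `p₁ > p₂ > ⋯ > pₙ`, for every `i` it has a normal subgroup of
order `p₁^{a₁} ⋯ p_i^{a_i}`. -/
def OreDispersive (G : Type*) [Group G] : Prop :=
  ∀ p : ℕ, p.Prime → ∃ N : Subgroup G, N.Normal ∧
    Nat.card N =
      ∏ q ∈ (Nat.card G).primeFactors.filter (fun q => p ≤ q),
        q ^ (Nat.card G).factorization q

/-- `A/B` is a chief factor of `G`. -/
def IsChiefFactor {G : Type*} [Group G] (A B : Subgroup G) : Prop :=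
  A.Normal ∧ B ≤ A ∧ ∃ hB : B.Normal,
    haveI := hB
    IsMinimalNormal (A.map (QuotientGroup.mk' B))

/-- The subgroups `H` and `K` of `G` are conjugate in `G`. -/
def ConjSubgroup {G : Type*} [Group G] (H K : Subgroup G) : Prop :=
  ∃ g : G, K = H.map (MulAut.conj g).toMonoidHom

/-- The Frattini subgroup of a subgroup `H` of `G`, as a subgroup of `G`. -/
def frattiniIn {G : Type*} [Group G] (H : Subgroup G) : Subgroup G :=
  (frattini H).map H.subtype

/-- `G = P ⋊ (Q ⋊ R)` as an internal statement about subgroups `P`, `Q`, `R` of `G`. -/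
def IsInternalSemidirect3 {G : Type*} [Group G] (P Q R : Subgroup G) : Prop :=
  P.Normal ∧ P ⊓ (Q ⊔ R) = ⊥ ∧ P ⊔ Q ⊔ R = ⊤ ∧
    (Q.subgroupOf (Q ⊔ R)).Normal ∧ Q ⊓ R = ⊥

/-- `G = P ⋊ (Q ⋊ (R ⋊ T))` as an internal statement about subgroups of `G`. -/
def IsInternalSemidirect4 {G : Type*} [Group G] (P Q R T : Subgroup G) : Prop :=
  P.Normal ∧ P ⊓ (Q ⊔ R ⊔ T) = ⊥ ∧ P ⊔ Q ⊔ R ⊔ T = ⊤ ∧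
    (Q.subgroupOf (Q ⊔ R ⊔ T)).Normal ∧ Q ⊓ (R ⊔ T) = ⊥ ∧
    (R.subgroupOf (R ⊔ T)).Normal ∧ R ⊓ T = ⊥

/-!
The main tool is that `G^𝔘 ≤ Φ(G)` forces `G` to be supersoluble. In a minimal counterexample `G^𝔘`
is the unique minimal normal subgroup, an elementary abelian `p`-group. As `G / G^𝔘` is
supersoluble and, by the Frattini argument, has no normal subgroup of prime order other than `p`,
the residual `D` of `G` for abelian groups of exponent dividing `p - 1` is a `p`-group, so it
centralizes `G^𝔘`. Hence `G / D` acts on `G^𝔘` by commuting diagonalizable maps, and irreducibility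
gives order `p`.

Let every 2-maximal subgroup be `K`-`𝔘`-subnormal, and let `K` be maximal in a maximal subgroup
`M`. Intersecting the step at which a chain from `K` to `G` leaves the subgroups not containing `M`
with `M` shows `M^𝔘 ≤ K`. So `M^𝔘 ≤ Φ(M)` and `M` is supersoluble: a nonsupersoluble `G` is minimal
nonsupersoluble. Suppose `G^𝔘` is not minimal normal and choose `1 ≠ N < G^𝔘` normal in `G` with
`G^𝔘 / N` a chief factor, a `p`-group since `G` is soluble (fusion at the smallest prime divisor
shows that a simple group with supersoluble proper subgroups is not perfect); then `G^𝔘` is a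
`p`-group as well, by the Frattini argument. For a maximal subgroup `M` not containing `G^𝔘`, the
last step of a chain from each maximal subgroup of `M` shows `N ≤ Φ(M)`. In the SDH-group `G / N`
the complement `M / N` of the residual has order prime to `p`, so `p` does not divide `|N|`, a
contradiction.

Conversely, in an SDH-group a maximal subgroup `K` of a maximal subgroup `M` is joined to `G`
through `M` if `G^𝔘 ≤ M`, and otherwise through `K G^𝔘`, which is proper and therefore
supersoluble.
-/

universe u

theorem exists_chain_iff_reflTransGen {α : Type*} {r : α → α → Prop} {a b : α} :
    (∃ (n : ℕ) (c : Fin (n + 1) → α), c 0 = a ∧ c (Fin.last n) = b ∧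
      ∀ i : Fin n, r (c i.castSucc) (c i.succ)) ↔ Relation.ReflTransGen r a b := by
  constructor
  · rintro ⟨n, c, rfl, rfl, h⟩
    have reaches (i : Fin (n + 1)) : Relation.ReflTransGen r (c 0) (c i) := by
      induction i using Fin.induction with
      | zero => exact .refl
      | succ i ih => exact ih.tail (h i)
    exact reaches _
  · intro h
    induction h using Relation.ReflTransGen.head_induction_on with
    | refl => exact ⟨0, fun _ => b, rfl, rfl, fun i => i.elim0⟩
    | @head x y hxy _ ih =>
      obtain ⟨n, c, hc₀, hcn, hc⟩ := ih
      exact ⟨n + 1, Fin.cons x c, rfl, hcn, Fin.cases (by simpa [hc₀] using hxy) hc⟩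

theorem isCyclic_quotient_of_ker_eq {K Q : Type*} [Group K] [Group Q] [IsCyclic Q]
    (φ : K →* Q) {N : Subgroup K} [N.Normal] (h : φ.ker = N) : IsCyclic (K ⧸ N) := by
  subst h
  exact isCyclic_of_injective (QuotientGroup.kerLift φ) (QuotientGroup.kerLift_injective φ)

/-- One step of a supersoluble series: `A ≤ B` are normal subgroups of `G` with `B / A` cyclic.
As a relation on subgroups it replaces the `Fin`-indexed series of `IsSupersoluble`. -/
structure IsCyclicStep {G : Type*} [Group G] (A B : Subgroup G) : Prop where
  normal_left : A.Normal
  normal_right : B.Normal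
  le : A ≤ B
  isCyclic_quotient :
    haveI := normal_left.subgroupOf B
    IsCyclic (B ⧸ A.subgroupOf B)

/-- There is a series of normal subgroups of `G` with cyclic factors leading from `N` to `G`. For
normal `N` this says that `G / N` is supersoluble, without mentioning the quotient group. -/
def HasCyclicSeries {G : Type*} [Group G] (N : Subgroup G) : Prop :=
  Relation.ReflTransGen IsCyclicStep N ⊤

/-! ### Supersoluble series and the supersoluble residual -/

section CyclicSeries

variable {K G : Type*} [Group K] [Group G]

namespace IsCyclicStep

variable {A B : Subgroup G}

theorem comap (h : IsCyclicStep A B) (f : K →* G) : IsCyclicStep (A.comap f) (B.comap f) where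
  normal_left := h.normal_left.comap f
  normal_right := h.normal_right.comap f
  le := Subgroup.comap_mono h.le
  isCyclic_quotient := by
    have := h.normal_left.subgroupOf B
    have := (h.normal_left.comap f).subgroupOf (B.comap f)
    have := h.isCyclic_quotient
    refine isCyclic_quotient_of_ker_eq
      ((QuotientGroup.mk' (A.subgroupOf B)).comp (f.subgroupComap B)) ?_
    rw [← MonoidHom.comap_ker, QuotientGroup.ker_mk']
    rfl

theorem inf (h : IsCyclicStep A B) (C : Subgroup G) [hC : C.Normal] :
    IsCyclicStep (A ⊓ C) (B ⊓ C) where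
  normal_left := have := h.normal_left; inferInstance
  normal_right := have := h.normal_right; inferInstance
  le := inf_le_inf_right C h.le
  isCyclic_quotient := by
    have := h.normal_left
    have := h.isCyclic_quotient
    refine isCyclic_quotient_of_ker_eq
      ((QuotientGroup.mk' (A.subgroupOf B)).comp (Subgroup.inclusion inf_le_left)) ?_
    rw [← MonoidHom.comap_ker, QuotientGroup.ker_mk']
    ext x
    simpa [Subgroup.mem_subgroupOf] using fun _ => x.2.2

theorem map {A B : Subgroup K} (h : IsCyclicStep A B) {f : K →* G} (hf : Function.Surjective f) :
    IsCyclicStep (A.map f) (B.map f) where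
  normal_left := h.normal_left.map f hf
  normal_right := h.normal_right.map f hf
  le := Subgroup.map_mono h.le
  isCyclic_quotient := by
    have := h.normal_left.subgroupOf B
    have := (h.normal_left.map f hf).subgroupOf (B.map f)
    have := h.isCyclic_quotient
    refine isCyclic_of_surjective (QuotientGroup.map (A.subgroupOf B)
      ((A.map f).subgroupOf (B.map f)) (f.subgroupMap B) fun x hx => ⟨x, hx, rfl⟩) ?_
    exact QuotientGroup.map_surjective_of_surjective _ _ _
      ((QuotientGroup.mk'_surjective _).comp (f.subgroupMap_surjective B)) _

theorem commutator_le (h : IsCyclicStep A B) : ⁅B, B⁆ ≤ A := by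
  have := h.normal_left.subgroupOf B
  have := h.isCyclic_quotient
  have := (Subgroup.Normal.quotient_commutative_iff_commutator_le (N := A.subgroupOf B)).1
    (IsCyclic.isMulCommutative)
  rwa [← Subgroup.map_subtype_commutator, Subgroup.map_le_iff_le_comap]

theorem bot_left [IsCyclic B] [hB : B.Normal] : IsCyclicStep ⊥ B where
  normal_left := inferInstance
  normal_right := hB
  le := bot_le
  isCyclic_quotient := isCyclic_of_surjective _ (QuotientGroup.mk'_surjective _)

theorem isCyclic (h : IsCyclicStep ⊥ B) : IsCyclic B := by
  have := h.isCyclic_quotient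
  refine isCyclic_of_injective (QuotientGroup.mk' ((⊥ : Subgroup G).subgroupOf B)) ?_
  rw [← MonoidHom.ker_eq_bot_iff, QuotientGroup.ker_mk', Subgroup.bot_subgroupOf]

end IsCyclicStep

namespace HasCyclicSeries

theorem top : HasCyclicSeries (⊤ : Subgroup G) := .refl

theorem comap {A : Subgroup G} (h : HasCyclicSeries A) (f : K →* G) :
    HasCyclicSeries (A.comap f) :=
  Relation.ReflTransGen.lift (p := IsCyclicStep) (Subgroup.comap f)
    (fun _ _ step => step.comap f) _ _ h

theorem map {A : Subgroup K} (h : HasCyclicSeries A) {f : K →* G} (hf : Function.Surjective f) :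
    HasCyclicSeries (A.map f) := by
  rw [HasCyclicSeries, ← Subgroup.map_top_of_surjective f hf]
  exact Relation.ReflTransGen.lift (p := IsCyclicStep) (Subgroup.map f)
    (fun _ _ step => step.map hf) _ _ h

theorem inf {A B : Subgroup G} (hA : HasCyclicSeries A) (hB : HasCyclicSeries B) [B.Normal] :
    HasCyclicSeries (A ⊓ B) := by
  refine Relation.ReflTransGen.trans ?_ hB
  rw [← top_inf_eq B, ← inf_assoc, inf_top_eq]
  exact Relation.ReflTransGen.lift (p := IsCyclicStep) (· ⊓ B) (fun _ _ step => step.inf B) _ _ hA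

end HasCyclicSeries

theorem isSupersoluble_iff_hasCyclicSeries_bot :
    IsSupersoluble G ↔ HasCyclicSeries (⊥ : Subgroup G) := by
  rw [HasCyclicSeries, ← exists_chain_iff_reflTransGen]
  constructor
  · rintro ⟨n, c, hc, h₀, hn, h⟩
    exact ⟨n, c, h₀, hn, fun i => ⟨hc _, hc _, (h i).1, (h i).2⟩⟩
  · rintro ⟨n, c, h₀, hn, h⟩
    have hc : ∀ i, (c i).Normal :=
      Fin.cases (h₀ ▸ inferInstance) fun i => (h i).normal_right
    exact ⟨n, c, hc, h₀, hn, fun i => ⟨(h i).le, (h i).isCyclic_quotient⟩⟩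

theorem isSupersoluble_quotient_iff (N : Subgroup G) [N.Normal] :
    IsSupersoluble (G ⧸ N) ↔ HasCyclicSeries N := by
  rw [isSupersoluble_iff_hasCyclicSeries_bot]
  constructor
  · intro h
    simpa using h.comap (QuotientGroup.mk' N)
  · intro h
    simpa using h.map (QuotientGroup.mk'_surjective N)

theorem HasCyclicSeries.mono {A B : Subgroup G} [B.Normal] (h : HasCyclicSeries A) (hAB : A ≤ B) :
    HasCyclicSeries B := by
  have := (h.map (QuotientGroup.mk'_surjective B)).comap (QuotientGroup.mk' B)
  rwa [QuotientGroup.comap_map_mk', sup_of_le_left hAB] at this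

namespace IsSupersoluble

theorem of_injective {f : K →* G} (hf : Function.Injective f) (h : IsSupersoluble G) :
    IsSupersoluble K := by
  rw [isSupersoluble_iff_hasCyclicSeries_bot] at *
  rw [← (MonoidHom.ker_eq_bot_iff f).2 hf]
  exact h.comap f

theorem of_surjective {f : K →* G} (hf : Function.Surjective f) (h : IsSupersoluble K) :
    IsSupersoluble G := by
  rw [isSupersoluble_iff_hasCyclicSeries_bot] at *
  rw [← Subgroup.map_bot f]
  exact h.map hf

theorem subgroup (h : IsSupersoluble G) (H : Subgroup G) : IsSupersoluble H :=
  h.of_injective H.subtype_injective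

theorem mono {H K : Subgroup G} (h : IsSupersoluble K) (hHK : H ≤ K) : IsSupersoluble H :=
  h.of_injective (Subgroup.inclusion_injective hHK)

theorem isSolvable (h : IsSupersoluble G) : Group.IsSolvable G := by
  rw [isSupersoluble_iff_hasCyclicSeries_bot] at h
  have derivedSeries_le {A : Subgroup G} (hA : HasCyclicSeries A) :
      ∃ n, derivedSeries G n ≤ A := by
    induction hA using Relation.ReflTransGen.head_induction_on with
    | refl => exact ⟨0, le_top⟩
    | head step _ ih =>
      obtain ⟨n, hn⟩ := ih
      exact ⟨n + 1, (Subgroup.commutator_mono hn hn).trans step.commutator_le⟩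
  obtain ⟨n, hn⟩ := derivedSeries_le h
  exact (Group.isSolvable_def G).2 ⟨n, le_bot_iff.1 hn⟩

theorem of_normal_of_isCyclic (N : Subgroup G) [N.Normal] [IsCyclic N]
    (h : IsSupersoluble (G ⧸ N)) : IsSupersoluble G := by
  rw [isSupersoluble_quotient_iff] at h
  exact isSupersoluble_iff_hasCyclicSeries_bot.2 (.head .bot_left h)

end IsSupersoluble

end CyclicSeries

section Residual

variable {K G : Type*} [Group K] [Group G]

theorem surjective_mk'_comp_subtype {X N : Subgroup G} [N.Normal] (h : X ⊔ N = ⊤) :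
    Function.Surjective ((QuotientGroup.mk' N).comp X.subtype) := by
  rw [← MonoidHom.range_eq_top, MonoidHom.range_comp, X.range_subtype,
    ← (Subgroup.comap_injective (QuotientGroup.mk'_surjective N)).eq_iff,
    QuotientGroup.comap_map_mk', sup_comm, h, Subgroup.comap_top]

theorem IsSupersoluble.of_isCyclic [IsCyclic G] : IsSupersoluble G :=
  have : IsCyclic (⊤ : Subgroup G) := (Subgroup.topEquiv (G := G)).isCyclic.2 ‹_›
  isSupersoluble_iff_hasCyclicSeries_bot.2 (.single .bot_left)

instance ssResidual_normal : (ssResidual G).Normal :=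
  Subgroup.normal_iInf_normal fun _ => Subgroup.normal_iInf_normal fun hN => hN.1

theorem HasCyclicSeries.ssResidual_le {N : Subgroup G} [hN : N.Normal] (h : HasCyclicSeries N) :
    ssResidual G ≤ N :=
  iInf₂_le_of_le N ⟨hN, (isSupersoluble_quotient_iff N).2 h⟩ le_rfl

variable [Finite G]

variable (G) in
theorem hasCyclicSeries_ssResidual : HasCyclicSeries (ssResidual G) := by
  obtain ⟨N, ⟨hN, hNs⟩, hmin⟩ := (Set.toFinite {N : Subgroup G | N.Normal ∧ HasCyclicSeries N}
    ).exists_minimal ⟨⊤, inferInstance, .top⟩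
  suffices N ≤ ssResidual G from le_antisymm hNs.ssResidual_le this ▸ hNs
  refine le_iInf₂ fun L ⟨hL, hLs⟩ => ?_
  rw [isSupersoluble_quotient_iff] at hLs
  exact (hmin ⟨inferInstance, hNs.inf hLs⟩ inf_le_left).trans inf_le_right

theorem hasCyclicSeries_iff_ssResidual_le {N : Subgroup G} [N.Normal] :
    HasCyclicSeries N ↔ ssResidual G ≤ N :=
  ⟨fun h => h.ssResidual_le, (hasCyclicSeries_ssResidual G).mono⟩

theorem isSupersoluble_quotient_iff_ssResidual_le {N : Subgroup G} [N.Normal] :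
    IsSupersoluble (G ⧸ N) ↔ ssResidual G ≤ N := by
  rw [isSupersoluble_quotient_iff, hasCyclicSeries_iff_ssResidual_le]

theorem isSupersoluble_iff_ssResidual_eq_bot : IsSupersoluble G ↔ ssResidual G = ⊥ := by
  rw [isSupersoluble_iff_hasCyclicSeries_bot, hasCyclicSeries_iff_ssResidual_le, le_bot_iff]

theorem map_ssResidual_le (f : K →* G) : (ssResidual K).map f ≤ ssResidual G :=
  Subgroup.map_le_iff_le_comap.2 ((hasCyclicSeries_ssResidual G).comap f).ssResidual_le

theorem map_ssResidual_of_surjective [Finite K] {f : K →* G} (hf : Function.Surjective f) :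
    (ssResidual K).map f = ssResidual G :=
  have := (ssResidual_normal (G := K)).map f hf
  le_antisymm (map_ssResidual_le f) ((hasCyclicSeries_ssResidual K).map hf).ssResidual_le

theorem ssResidual_le_of_sup_eq_top {X N : Subgroup G} [N.Normal] (hX : IsSupersoluble X)
    (h : X ⊔ N = ⊤) : ssResidual G ≤ N := by
  rw [← isSupersoluble_quotient_iff_ssResidual_le]
  exact hX.of_surjective (surjective_mk'_comp_subtype h)

theorem ssResidual_le_of_isCoatom {M : Subgroup G} [M.Normal] (hM : IsCoatom M) :
    ssResidual G ≤ M := by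
  obtain ⟨g, -, hg⟩ := SetLike.exists_of_lt hM.lt_top
  refine ssResidual_le_of_sup_eq_top (X := Subgroup.zpowers g) .of_isCyclic (hM.2 _ ?_)
  exact right_lt_sup.2 (by simpa using hg)

theorem IsSupersoluble.of_ssResidual_le {N : Subgroup G} [N.Normal] [IsCyclic N]
    (h : ssResidual G ≤ N) : IsSupersoluble G :=
  .of_normal_of_isCyclic N (isSupersoluble_quotient_iff_ssResidual_le.2 h)

end Residual

section MinimalNormal

variable {G : Type*} [Group G]

theorem normal_of_le_of_isCyclic {H N : Subgroup G} [N.Normal] [IsCyclic N] (h : H ≤ N) :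
    H.Normal where
  conj_mem x hx g := by
    obtain ⟨m, hm⟩ := MonoidHom.map_cyclic (MulAut.conjNormal g : MulAut N).toMonoidHom
    have hgx : g * x * g⁻¹ = x ^ m := congrArg Subtype.val (hm ⟨x, h hx⟩)
    exact hgx ▸ H.zpow_mem hx m

namespace IsMinimalNormal

theorem exists_le [Finite G] {N : Subgroup G} [hN : N.Normal] (hne : N ≠ ⊥) :
    ∃ M, IsMinimalNormal M ∧ M ≤ N := by
  obtain ⟨M, ⟨hM, hM₀, hMN⟩, hmin⟩ := (Set.toFinite {M : Subgroup G | M.Normal ∧ M ≠ ⊥ ∧ M ≤ N}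
    ).exists_minimal ⟨N, hN, hne, le_rfl⟩
  exact ⟨M, ⟨hM, hM₀, fun L hL hLM hL₀ =>
    hLM.antisymm (hmin ⟨hL, hL₀, hLM.trans hMN⟩ hLM)⟩, hMN⟩

variable {M : Subgroup G}

theorem eq_bot_or_le (hM : IsMinimalNormal M) (N : Subgroup G) [N.Normal] : N ⊓ M = ⊥ ∨ M ≤ N := by
  have := hM.1
  by_cases h : N ⊓ M = ⊥
  · exact .inl h
  · exact .inr (inf_eq_right.1 (hM.2.2 (N ⊓ M) inferInstance inf_le_right h))

theorem prime_card_of_isCyclic [IsCyclic M] (hM : IsMinimalNormal M) :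
    (Nat.card M).Prime := by
  have := hM.1
  have : Nontrivial M := (Subgroup.nontrivial_iff_ne_bot M).2 hM.2.1
  have : IsSimpleGroup M := ⟨fun H _ => by
    have := normal_of_le_of_isCyclic (Subgroup.map_subtype_le H)
    refine (hM.eq_bot_or_le (H.map M.subtype)).imp (fun h => ?_) fun h => ?_
    · rwa [inf_eq_left.2 (Subgroup.map_subtype_le H), Subgroup.map_eq_bot_iff_of_injective _
        M.subtype_injective] at h
    · exact eq_top_iff.2 fun x _ => by simpa using h x.2⟩
  let := IsCyclic.commGroup (α := M)
  exact IsSimpleGroup.prime_card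

theorem isCyclic_of_isSupersoluble (hM : IsMinimalNormal M) (h : IsSupersoluble G) :
    IsCyclic M := by
  have := hM.1
  have isCyclic_of_series {A : Subgroup G} (hA : HasCyclicSeries A) :
      A ⊓ M = ⊥ → IsCyclic M := by
    induction hA using Relation.ReflTransGen.head_induction_on with
    | refl => exact fun hM₀ => absurd (by simpa using hM₀) hM.2.1
    | @head A B step _ ih =>
      intro hA
      have := step.normal_right
      refine (hM.eq_bot_or_le B).elim ih fun hB => ?_
      have step := step.inf M
      rw [hA, inf_eq_right.2 hB] at step
      exact step.isCyclic
  exact isCyclic_of_series (isSupersoluble_iff_hasCyclicSeries_bot.1 h) (bot_inf_eq M)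

theorem prime_card_of_isSupersoluble (hM : IsMinimalNormal M) (h : IsSupersoluble G) :
    (Nat.card M).Prime :=
  have := hM.isCyclic_of_isSupersoluble h
  hM.prime_card_of_isCyclic

end IsMinimalNormal

theorem IsSupersoluble.exists_normal_le_prime_card [Finite G] (h : IsSupersoluble G)
    {N : Subgroup G} [N.Normal] (hne : N ≠ ⊥) :
    ∃ M : Subgroup G, M.Normal ∧ M ≤ N ∧ (Nat.card M).Prime := by
  obtain ⟨M, hM, hMN⟩ := IsMinimalNormal.exists_le hne
  exact ⟨M, hM.1, hMN, hM.prime_card_of_isSupersoluble h⟩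

theorem card_quotient_lt [Finite G] {N : Subgroup G} (hN : N ≠ ⊥) :
    Nat.card (G ⧸ N) < Nat.card G := by
  rw [N.card_eq_card_quotient_mul_card_subgroup]
  exact lt_mul_of_one_lt_right Nat.card_pos (N.one_lt_card_iff_ne_bot.2 hN)

end MinimalNormal

theorem IsSupersoluble.induction {motive : ∀ (G : Type u) [Group G], Prop}
    (subsingleton : ∀ (G : Type u) [Group G] [Subsingleton G], motive G)
    (extension : ∀ (G : Type u) [Group G] [Finite G] (N : Subgroup G) [N.Normal],
      (Nat.card N).Prime → motive (G ⧸ N) → motive G)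
    (G : Type u) [Group G] [Finite G] (h : IsSupersoluble G) : motive G := by
  induction hn : Nat.card G using Nat.strong_induction_on generalizing G with
  | _ n ih =>
    subst hn
    cases subsingleton_or_nontrivial G with
    | inl _ => exact subsingleton G
    | inr _ =>
      obtain ⟨N, hN, -, hNp⟩ := h.exists_normal_le_prime_card (N := ⊤) top_ne_bot
      have hN₀ : N ≠ ⊥ := by rintro rfl; simp [Nat.not_prime_one] at hNp
      exact extension G N hNp (ih _ (card_quotient_lt hN₀) (G ⧸ N)
        (h.of_surjective (QuotientGroup.mk'_surjective N)) rfl)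

section MapSubtype

variable {G : Type*} [Group G] {K : Subgroup G}

theorem map_subtype_top (K : Subgroup G) : (⊤ : Subgroup K).map K.subtype = K := by
  rw [← MonoidHom.range_eq_map, Subgroup.range_subtype]

theorem map_subtype_lt {H : Subgroup K} (h : H < ⊤) : H.map K.subtype < K := by
  simpa only [map_subtype_top] using Subgroup.map_subtype_lt_map_subtype.2 h

theorem map_subtype_sup_map_subtype {A B : Subgroup K} (h : A ⊔ B = ⊤) :
    A.map K.subtype ⊔ B.map K.subtype = K := by
  rw [← Subgroup.map_sup, h, map_subtype_top]

end MapSubtype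

section Coprime

variable {G : Type*} [Group G]

theorem mem_of_coprime_index {N : Subgroup G} [N.Normal] {x : G}
    (h : (orderOf x).Coprime N.index) : x ∈ N := by
  rw [← QuotientGroup.eq_one_iff, ← orderOf_eq_one_iff]
  exact Nat.eq_one_of_dvd_coprimes h (orderOf_map_dvd (QuotientGroup.mk' N) x)
    (orderOf_dvd_natCard _)

theorem le_of_coprime_index {H N : Subgroup G} [N.Normal]
    (h : (Nat.card H).Coprime N.index) : H ≤ N := fun _ hx =>
  mem_of_coprime_index (h.of_dvd_left (Subgroup.orderOf_dvd_natCard H hx))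

theorem normal_of_coprime_relIndex {K L : Subgroup G} [K.Normal] [(L.subgroupOf K).Normal]
    (hLK : L ≤ K) (h : (Nat.card L).Coprime (L.relIndex K)) : L.Normal where
  conj_mem x hx g := by
    have hgx : g * x * g⁻¹ ∈ K := Subgroup.Normal.conj_mem ‹_› x (hLK hx) g
    have hord : orderOf (⟨g * x * g⁻¹, hgx⟩ : K) = orderOf x := by
      rw [← Subgroup.orderOf_coe]
      exact (MulAut.conj g).orderOf_eq x
    have : (⟨g * x * g⁻¹, hgx⟩ : K) ∈ L.subgroupOf K :=
      mem_of_coprime_index (hord ▸ h.of_dvd_left (Subgroup.orderOf_dvd_natCard L hx))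
    exact this

theorem card_mul_relIndex {H K : Subgroup G} (h : H ≤ K) :
    Nat.card H * H.relIndex K = Nat.card K := by
  rw [← H.relIndex_bot_left, Subgroup.relIndex_mul_relIndex _ _ _ bot_le h, K.relIndex_bot_left]

theorem relIndex_comap_mk' (N : Subgroup G) [N.Normal] (K : Subgroup (G ⧸ N)) :
    N.relIndex (K.comap (QuotientGroup.mk' N)) = Nat.card K := by
  have := Subgroup.relIndex_ker (K := K.comap (QuotientGroup.mk' N)) (QuotientGroup.mk' N)
  rwa [QuotientGroup.ker_mk',
    Subgroup.map_comap_eq_self_of_surjective (QuotientGroup.mk'_surjective N)] at this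

theorem index_comap_mk' (N : Subgroup G) [N.Normal] (K : Subgroup (G ⧸ N)) :
    (K.comap (QuotientGroup.mk' N)).index = K.index :=
  K.index_comap_of_surjective (QuotientGroup.mk'_surjective N)

theorem exists_normal_complement_of_le_centralizer {N K : Subgroup G} [K.Normal]
    (hNK : N ≤ K) (hK : K ≤ Subgroup.centralizer N) (h : (Nat.card N).Coprime (N.relIndex K)) :
    ∃ L : Subgroup G, L.Normal ∧ L ≤ K ∧ Nat.card L = N.relIndex K ∧
      L.relIndex K = Nat.card N := by
  have : (N.subgroupOf K).Normal := Subgroup.normal_subgroupOf_of_le_normalizer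
    (hK.trans (Subgroup.centralizer_le_normalizer _))
  have hN : Nat.card (N.subgroupOf K) = Nat.card N := Nat.card_congr
    (Subgroup.subgroupOfEquivOfLe hNK).toEquiv
  obtain ⟨L, hL⟩ :=
    Subgroup.exists_right_complement'_of_coprime (N := N.subgroupOf K) (hN.symm ▸ h)
  have hLcard : Nat.card L = N.relIndex K := hL.symm.index_eq_card.symm
  have hLindex : L.index = Nat.card N := hL.index_eq_card.trans hN
  have hLnormal : L.Normal := by
    rw [← Subgroup.normalizer_eq_top_iff, eq_top_iff, ← hL.sup_eq_top]
    refine sup_le (fun x hx => ?_) Subgroup.le_normalizer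
    refine Subgroup.centralizer_le_normalizer _ (Subgroup.mem_centralizer_iff.2 fun y _ => ?_)
    exact Subtype.ext (hK y.2 x hx).symm
  have hcomap : (L.map K.subtype).subgroupOf K = L :=
    Subgroup.comap_map_eq_self_of_injective K.subtype_injective L
  have hcard : Nat.card (L.map K.subtype) = N.relIndex K :=
    (Subgroup.card_subtype K L).trans hLcard
  have hrel : (L.map K.subtype).relIndex K = Nat.card N := by
    rw [Subgroup.relIndex, hcomap, hLindex]
  have : ((L.map K.subtype).subgroupOf K).Normal := hcomap.symm ▸ hLnormal
  exact ⟨L.map K.subtype, normal_of_coprime_relIndex (Subgroup.map_subtype_le L)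
    (hcard.symm ▸ hrel.symm ▸ h.symm), Subgroup.map_subtype_le L, hcard, hrel⟩

end Coprime

section PrimeOrder

variable {G : Type*} [Group G]

theorem ker_conjNormal (N : Subgroup G) [N.Normal] :
    (MulAut.conjNormal : G →* MulAut N).ker = Subgroup.centralizer N := by
  ext x
  rw [MonoidHom.mem_ker, Subgroup.mem_centralizer_iff, MulEquiv.ext_iff, Subtype.forall]
  refine forall₂_congr fun y hy => ?_
  rw [Subtype.ext_iff, MulAut.conjNormal_apply, MulAut.one_apply, mul_inv_eq_iff_eq_mul, eq_comm]

variable {N : Subgroup G} [N.Normal] {p : ℕ} [hp : Fact p.Prime]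

theorem le_centralizer_of_card_eq_prime {N : Subgroup G} (hN : Nat.card N = p) :
    N ≤ Subgroup.centralizer N :=
  have := isCyclic_of_prime_card hN
  N.le_centralizer

theorem le_centralizer_of_coprime [Finite G] (hN : Nat.card N = p) {K : Subgroup G}
    (h : (N.relIndex K).Coprime (p - 1)) : K ≤ Subgroup.centralizer N := by
  have := isCyclic_of_prime_card hN
  intro x hx
  have hcard : Nat.card (MulAut N) = p - 1 := by
    rw [IsCyclic.card_mulAut, hN, Nat.totient_prime hp.out]
  have hpow : x ^ N.relIndex K ∈ (MulAut.conjNormal : G →* MulAut N).ker :=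
    ker_conjNormal N ▸ le_centralizer_of_card_eq_prime hN (N.pow_relIndex_mem hx)
  rw [MonoidHom.mem_ker, map_pow] at hpow
  rw [← ker_conjNormal, MonoidHom.mem_ker, ← orderOf_eq_one_iff]
  exact Nat.eq_one_of_dvd_coprimes h (orderOf_dvd_of_pow_eq_one hpow)
    (hcard ▸ orderOf_dvd_natCard _)

end PrimeOrder

/-- `N` is a Hall `π`-subgroup of `G`, expressed through the prime divisors of its order and index.
The cases `π = {q | k ≤ q}` encode that supersoluble groups have Sylow towers. -/
structure IsHall {G : Type*} [Group G] (π : Set ℕ) (N : Subgroup G) : Prop where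
  mem_of_dvd_card : ∀ p : ℕ, p.Prime → p ∣ Nat.card N → p ∈ π
  notMem_of_dvd_index : ∀ p : ℕ, p.Prime → p ∣ N.index → p ∉ π

theorem IsHall.coprime {G : Type*} [Group G] {π : Set ℕ} {N : Subgroup G} (h : IsHall π N) :
    (Nat.card N).Coprime N.index :=
  Nat.coprime_of_dvd fun p hp h₁ h₂ =>
    h.notMem_of_dvd_index p hp h₂ (h.mem_of_dvd_card p hp h₁)

theorem IsSupersoluble.exists_normal_isHall_Ici (k : ℕ) (G : Type u) [Group G] [Finite G]
    (h : IsSupersoluble G) : ∃ N : Subgroup G, N.Normal ∧ IsHall (Set.Ici k) N := by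
  refine h.induction (motive := fun G => ∃ N : Subgroup G, N.Normal ∧ IsHall (Set.Ici k) N)
    (fun G _ _ => ⟨⊥, inferInstance, ?_, ?_⟩) (fun G _ _ N _ hN ⟨K', _, hK'⟩ => ?_)
  · intro p hp hdvd
    simp [hp.ne_one] at hdvd
  · intro p hp hdvd
    simp [hp.ne_one] at hdvd
  set K := K'.comap (QuotientGroup.mk' N)
  have hNK : N ≤ K := QuotientGroup.le_comap_mk' N K'
  have hrel : N.relIndex K = Nat.card K' := relIndex_comap_mk' N K'
  have hindex : K.index = K'.index := index_comap_mk' N K'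
  obtain ⟨r, hr⟩ : ∃ r, Nat.card N = r := ⟨_, rfl⟩
  rw [hr] at hN
  by_cases hkr : k ≤ r
  · refine ⟨K, inferInstance, fun p hp hdvd => ?_, hindex ▸ hK'.notMem_of_dvd_index⟩
    rw [← card_mul_relIndex hNK, hrel, hr, hp.dvd_mul, Nat.prime_dvd_prime_iff_eq hp hN] at hdvd
    exact hdvd.elim (fun hpr => hpr ▸ hkr) (hK'.mem_of_dvd_card p hp)
  · have coprime_of_lt {m : ℕ} (hm₀ : 0 < m) (hm : m < k) : (Nat.card K').Coprime m :=
      Nat.coprime_of_dvd fun p hp hpK hpm => absurd (hK'.mem_of_dvd_card p hp hpK)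
        (Set.notMem_Ici.2 ((Nat.le_of_dvd hm₀ hpm).trans_lt hm))
    have := Fact.mk hN
    have := hN.one_lt
    obtain ⟨L, hL, hLK, hLcard, hLrel⟩ := exists_normal_complement_of_le_centralizer hNK
      (le_centralizer_of_coprime hr (hrel ▸ coprime_of_lt (by omega) (by omega)))
      (by rw [hr, hrel]; exact (coprime_of_lt (by omega) (by omega)).symm)
    refine ⟨L, hL, by rw [hLcard, hrel]; exact hK'.mem_of_dvd_card, fun p hp hdvd => ?_⟩
    rw [← Subgroup.relIndex_mul_index hLK, hLrel, hr, hindex, hp.dvd_mul,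
      Nat.prime_dvd_prime_iff_eq hp hN] at hdvd
    exact hdvd.elim (fun hpr => hpr ▸ hkr) (hK'.notMem_of_dvd_index p hp)

open scoped commutatorElement

/-! ### The residual for abelian groups of exponent dividing `p - 1` -/

section ZModUnitsResidual

/-- The intersection of the kernels of all homomorphisms `G →* (ZMod p)ˣ`, that is, the smallest
normal subgroup with abelian quotient of exponent dividing `p - 1`. It acts trivially on every
normal subgroup of order `p`. -/
def zmodUnitsResidual (p : ℕ) (G : Type*) [Group G] : Subgroup G :=
  ⨅ f : G →* (ZMod p)ˣ, f.ker

variable {p : ℕ} {K G : Type*} [Group K] [Group G]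

theorem mem_zmodUnitsResidual {x : G} :
    x ∈ zmodUnitsResidual p G ↔ ∀ f : G →* (ZMod p)ˣ, f x = 1 := by
  simp [zmodUnitsResidual, Subgroup.mem_iInf, MonoidHom.mem_ker]

instance zmodUnitsResidual_normal : (zmodUnitsResidual p G).Normal :=
  Subgroup.normal_iInf_normal fun f => f.normal_ker

theorem map_mem_zmodUnitsResidual (φ : K →* G) {x : K} (hx : x ∈ zmodUnitsResidual p K) :
    φ x ∈ zmodUnitsResidual p G :=
  mem_zmodUnitsResidual.2 fun f => mem_zmodUnitsResidual.1 hx (f.comp φ)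

theorem commutatorElement_mem_zmodUnitsResidual (x y : G) : ⁅x, y⁆ ∈ zmodUnitsResidual p G :=
  mem_zmodUnitsResidual.2 fun f => by
    rw [map_commutatorElement, commutatorElement_eq_one_iff_mul_comm, mul_comm]

variable [hp : Fact p.Prime]

theorem pow_sub_one_mem_zmodUnitsResidual (x : G) : x ^ (p - 1) ∈ zmodUnitsResidual p G :=
  mem_zmodUnitsResidual.2 fun f => by rw [map_pow, ZMod.units_pow_card_sub_one_eq_one]

theorem le_zmodUnitsResidual {P : Subgroup G} (hP : IsPGroup p P) : P ≤ zmodUnitsResidual p G := by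
  intro x hx
  obtain ⟨n, hn⟩ := hP ⟨x, hx⟩
  refine mem_zmodUnitsResidual.2 fun f => orderOf_eq_one_iff.1 (Nat.eq_one_of_dvd_coprimes
    (Nat.Coprime.pow_left n ?_) (orderOf_dvd_of_pow_eq_one (n := p ^ n) ?_)
    (orderOf_dvd_of_pow_eq_one (ZMod.units_pow_card_sub_one_eq_one p (f x))))
  · rw [Nat.coprime_self_sub_right hp.out.one_lt.le]
    exact Nat.coprime_one_right p
  · rw [← map_pow, show x ^ p ^ n = 1 from congrArg Subtype.val hn, map_one]

theorem zmodUnitsResidual_le_centralizer {N : Subgroup G} [N.Normal] (hN : Nat.card N = p) :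
    zmodUnitsResidual p G ≤ Subgroup.centralizer N := by
  intro x hx
  have := isCyclic_of_prime_card hN
  let e : MulAut N ≃* (ZMod p)ˣ := hN ▸ IsCyclic.mulAutMulEquiv N
  rw [← ker_conjNormal, MonoidHom.mem_ker, ← e.map_eq_one_iff]
  exact mem_zmodUnitsResidual.1 hx (e.toMonoidHom.comp MulAut.conjNormal)

end ZModUnitsResidual

theorem IsSupersoluble.exists_normal_not_dvd_card (p : ℕ) [hp : Fact p.Prime] (G : Type u)
    [Group G] [Finite G] (h : IsSupersoluble G) :
    ∃ K : Subgroup G, K.Normal ∧ ¬ p ∣ Nat.card K ∧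
      ∀ d ∈ zmodUnitsResidual p G, ∃ n, d ^ p ^ n ∈ K := by
  refine h.induction (motive := fun G => ∃ K : Subgroup G, K.Normal ∧ ¬ p ∣ Nat.card K ∧
      ∀ d ∈ zmodUnitsResidual p G, ∃ n, d ^ p ^ n ∈ K) (fun G _ _ => ⟨⊥, inferInstance, ?_, ?_⟩)
    (fun G _ _ N _ hN ⟨K', _, hpK', hK'⟩ => ?_)
  · simpa using hp.out.one_lt.ne'
  · exact fun d _ => ⟨0, Subsingleton.elim _ _⟩
  set K := K'.comap (QuotientGroup.mk' N)
  have hNK : N ≤ K := QuotientGroup.le_comap_mk' N K'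
  have hrel : N.relIndex K = Nat.card K' := relIndex_comap_mk' N K'
  have hpow (d : G) (hd : d ∈ zmodUnitsResidual p G) : ∃ n, d ^ p ^ n ∈ K :=
    hK' _ (map_mem_zmodUnitsResidual (QuotientGroup.mk' N) hd)
  by_cases hNp : Nat.card N = p
  · set D := zmodUnitsResidual p G
    have hND : N ≤ D := le_zmodUnitsResidual (IsPGroup.of_card (n := 1) (by simpa using hNp))
    have hpKD : ¬ p ∣ N.relIndex (K ⊓ D) := fun hdvd =>
      hpK' (hrel ▸ hdvd.trans (Dvd.intro _
        (Subgroup.relIndex_mul_relIndex _ _ _ (le_inf hNK hND) inf_le_left)))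
    obtain ⟨L, hL, _, hLcard, hLrel⟩ := exists_normal_complement_of_le_centralizer
      (le_inf hNK hND) (inf_le_right.trans (zmodUnitsResidual_le_centralizer hNp))
      (hNp ▸ (hp.out.coprime_iff_not_dvd).2 hpKD)
    refine ⟨L, hL, hLcard ▸ hpKD, fun d hd => ?_⟩
    obtain ⟨n, hn⟩ := hpow d hd
    refine ⟨n + 1, ?_⟩
    have := L.pow_relIndex_mem (K := K ⊓ D) ⟨hn, pow_mem hd _⟩
    rwa [hLrel, hNp, ← pow_mul, ← pow_succ] at this
  · refine ⟨K, inferInstance, ?_, hpow⟩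
    rw [← card_mul_relIndex hNK, hrel, hp.out.dvd_mul, Nat.prime_dvd_prime_iff_eq hp.out hN]
    exact fun hdvd => hdvd.elim (fun hpN => hNp hpN.symm) hpK'

/-! ### Frattini subgroups and the supersoluble residual -/

section ElementaryAbelian

theorem exists_hasEigenvector_of_pow_eq_self {p : ℕ} [hp : Fact p.Prime] {V : Type*}
    [AddCommGroup V] [Module (ZMod p) V] [Finite V] [Nontrivial V] (T : Module.End (ZMod p) V)
    (hT : T ^ p = T) : ∃ (a : ZMod p) (v : V), T.HasEigenvector a v := by
  have hne := FiniteField.X_pow_card_sub_X_ne_zero (ZMod p) hp.out.one_lt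
  have hsplits : (Polynomial.X ^ p - Polynomial.X : Polynomial (ZMod p)).Splits := by
    have := FiniteField.roots_X_pow_card_sub_X (ZMod p)
    rw [ZMod.card] at this
    rw [Polynomial.splits_iff_card_roots, this, FiniteField.X_pow_card_sub_X_natDegree_eq _
      hp.out.one_lt, Finset.card_val, Finset.card_univ, ZMod.card]
  have hdvd : minpoly (ZMod p) T ∣ Polynomial.X ^ p - Polynomial.X :=
    minpoly.dvd _ _ (by simp [hT])
  obtain ⟨a, ha⟩ := (hsplits.of_dvd hne hdvd).exists_eval_eq_zero
    (minpoly.degree_pos (Algebra.IsIntegral.isIntegral T)).ne'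
  exact ⟨a, (Module.End.hasEigenvalue_of_isRoot ha).exists_hasEigenvector⟩

variable {G : Type*} [Group G] {N : Subgroup G}

theorem IsMinimalNormal.commutator_eq_bot [Group.IsSolvable N] (hN : IsMinimalNormal N) :
    ⁅N, N⁆ = ⊥ := by
  have := hN.1
  by_contra hne
  have heq := hN.2.2 ⁅N, N⁆ inferInstance (Subgroup.commutator_le_left N N) hne
  have := (Subgroup.nontrivial_iff_ne_bot N).2 hN.2.1
  refine (Group.IsSolvable.commutator_lt_top_of_nontrivial N).ne
    (Subgroup.map_injective N.subtype_injective ?_)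
  rw [Subgroup.map_subtype_commutator, heq, map_subtype_top]

theorem IsMinimalNormal.le_centralizer [Group.IsSolvable N] (hN : IsMinimalNormal N) :
    N ≤ Subgroup.centralizer N :=
  Subgroup.commutator_eq_bot_iff_le_centralizer.1 hN.commutator_eq_bot

theorem IsMinimalNormal.eq_top_of_conjNormal_mem [N.Normal] (hN : IsMinimalNormal N)
    {E : Subgroup N} (hE : ∀ g : G, ∀ x ∈ E, MulAut.conjNormal g x ∈ E) (hne : E ≠ ⊥) : E = ⊤ := by
  have : (E.map N.subtype).Normal := ⟨by
    rintro _ ⟨x, hx, rfl⟩ g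
    exact ⟨_, hE g x hx, MulAut.conjNormal_apply g x⟩⟩
  refine Subgroup.map_injective N.subtype_injective ?_
  rw [hN.2.2 _ this (Subgroup.map_subtype_le E)
    (by rwa [Ne, Subgroup.map_eq_bot_iff_of_injective _ N.subtype_injective]),
    map_subtype_top]

open scoped IsMulCommutative

variable [IsMulCommutative N]

theorem IsMinimalNormal.exists_prime_pow_eq_one [Finite N] (hN : IsMinimalNormal N) :
    ∃ p : ℕ, p.Prime ∧ ∀ x : N, x ^ p = 1 := by
  have := hN.1
  obtain ⟨p, hp, hpN⟩ := Nat.exists_prime_and_dvd (mt Subgroup.card_eq_one.1 hN.2.1)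
  have := Fact.mk hp
  obtain ⟨x, hx⟩ := exists_prime_orderOf_dvd_card' p hpN
  have hker : (powMonoidHom p : N →* N).ker = ⊤ := by
    refine hN.eq_top_of_conjNormal_mem (fun g x hx => ?_) fun hbot => ?_
    · rw [MonoidHom.mem_ker, powMonoidHom_apply] at hx ⊢
      rw [← map_pow, hx, map_one]
    · have : x ∈ (powMonoidHom p : N →* N).ker := hx ▸ pow_orderOf_eq_one x
      rw [hbot, Subgroup.mem_bot] at this
      exact hp.one_lt.ne (by rw [← hx, this, orderOf_one])
  exact ⟨p, hp, fun x => (hker ▸ Subgroup.mem_top x : x ∈ (powMonoidHom p : N →* N).ker)⟩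

variable {p : ℕ} [hp : Fact p.Prime]

theorem exists_mulAut_apply_eq_pow {A : Type*} [CommGroup A] [Finite A] [Nontrivial A]
    (hexp : ∀ x : A, x ^ p = 1) (σ : MulAut A) (hσ : σ ^ p = σ) :
    ∃ (n : ℕ) (v : A), v ≠ 1 ∧ σ v = v ^ n := by
  let := AddCommGroup.zmodModule (G := Additive A) (n := p) hexp
  let T : Module.End (ZMod p) (Additive A) := (MonoidHom.toAdditive σ.toMonoidHom).toZModLinearMap p
  have hT (n : ℕ) (x : Additive A) : (T ^ n) x = Additive.ofMul ((σ ^ n) x.toMul) := by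
    induction n generalizing x with
    | zero => rfl
    | succ n ih => rw [pow_succ, Module.End.mul_apply, ih, pow_succ, MulAut.mul_apply]; rfl
  obtain ⟨a, v, hv⟩ := exists_hasEigenvector_of_pow_eq_self T
    (LinearMap.ext fun x => by rw [hT, hσ]; rfl)
  refine ⟨a.val, v.toMul, hv.2, ?_⟩
  have := hv.apply_eq_smul
  rw [← ZMod.natCast_zmod_val a, Nat.cast_smul_eq_nsmul] at this
  exact congrArg Additive.toMul this

theorem IsMinimalNormal.card_eq_prime [Finite N] (hN : IsMinimalNormal N)
    (hexp : ∀ x : N, x ^ p = 1) (hD : zmodUnitsResidual p G ≤ Subgroup.centralizer N) :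
    Nat.card N = p := by
  have := hN.1
  have := (Subgroup.nontrivial_iff_ne_bot N).2 hN.2.1
  rw [← ker_conjNormal] at hD
  have conj_eq_pow (g : G) : ∃ n : ℕ, ∀ v : N, MulAut.conjNormal g v = v ^ n := by
    have hg : (MulAut.conjNormal g : MulAut N) ^ p = MulAut.conjNormal g := by
      rw [← Nat.sub_add_cancel hp.out.one_le, pow_succ, ← map_pow,
        hD (pow_sub_one_mem_zmodUnitsResidual g), one_mul]
    obtain ⟨n, v, hv, hgv⟩ := exists_mulAut_apply_eq_pow hexp _ hg
    refine ⟨n, fun x => ?_⟩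
    have heq : (MulAut.conjNormal g : MulAut N).toMonoidHom.eqLocus (powMonoidHom n) = ⊤ := by
      refine hN.eq_top_of_conjNormal_mem (fun h x hx => ?_) fun hbot => ?_
      · have hcomm : (MulAut.conjNormal g : MulAut N) * MulAut.conjNormal h =
            MulAut.conjNormal h * MulAut.conjNormal g := by
          rw [← commutatorElement_eq_one_iff_mul_comm, ← map_commutatorElement]
          exact hD (commutatorElement_mem_zmodUnitsResidual g h)
        have hx : MulAut.conjNormal g x = x ^ n := hx
        exact (DFunLike.congr_fun hcomm x).trans
          ((congrArg (MulAut.conjNormal h) hx).trans (map_pow _ x n))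
      · exact hv (Subgroup.mem_bot.1 (hbot ▸ (show v ∈ MonoidHom.eqLocus _ _ from hgv)))
    exact (heq ▸ Subgroup.mem_top x : x ∈ MonoidHom.eqLocus _ _)
  obtain ⟨v, hv⟩ := exists_ne (1 : N)
  have hzpowers : Subgroup.zpowers v = ⊤ := by
    refine hN.eq_top_of_conjNormal_mem (fun g x hx => ?_) (Subgroup.zpowers_ne_bot.2 hv)
    obtain ⟨n, hn⟩ := conj_eq_pow g
    exact hn x ▸ pow_mem hx n
  rw [← orderOf_eq_card_of_zpowers_eq_top hzpowers]
  exact orderOf_eq_prime (hexp v) hv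

end ElementaryAbelian

section Frattini

variable {G : Type*} [Group G] [Finite G] {p : ℕ} [hp : Fact p.Prime]

theorem sylow_sup_eq_top_of_index_eq_pow (P : Sylow p G) {N : Subgroup G} {k : ℕ}
    (h : N.index = p ^ k) : (P : Subgroup G) ⊔ N = ⊤ :=
  Subgroup.index_eq_one.1 (Nat.eq_one_of_dvd_coprimes
    ((((hp.out.coprime_iff_not_dvd).2 P.not_dvd_index).pow_left k).symm)
    (Subgroup.index_dvd_of_le le_sup_left) (h ▸ Subgroup.index_dvd_of_le le_sup_right))

theorem normalizer_sylow_sup_eq_top_of_relIndex_eq_pow {M N : Subgroup G} [M.Normal]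
    (P : Sylow p M) {k : ℕ} (h : N.relIndex M = p ^ k) :
    Subgroup.normalizer ((P : Subgroup M).map M.subtype : Set G) ⊔ N = ⊤ := by
  have hM : M ≤ (P : Subgroup M).map M.subtype ⊔ N := by
    have := map_subtype_sup_map_subtype (sylow_sup_eq_top_of_index_eq_pow P h)
    exact this.ge.trans (sup_le_sup_left (Subgroup.map_comap_le M.subtype N) _)
  rw [eq_top_iff, ← P.normalizer_sup_eq_top]
  exact sup_le le_sup_left (hM.trans (sup_le_sup_right Subgroup.le_normalizer N))

theorem sylow_normal_of_relIndex_eq_pow_of_le_frattini {M N : Subgroup G} [M.Normal]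
    (P : Sylow p M) {k : ℕ} (h : N.relIndex M = p ^ k) (hN : N ≤ frattini G) :
    ((P : Subgroup M).map M.subtype).Normal :=
  Subgroup.normalizer_eq_top_iff.1 (frattini_nongenerating (top_le_iff.1
    ((normalizer_sylow_sup_eq_top_of_relIndex_eq_pow P h).ge.trans (sup_le_sup_left hN _))))

end Frattini

section CentralizeMinimalNormal

variable {G : Type*} [Group G] [Finite G] {p : ℕ} [hp : Fact p.Prime] {V : Subgroup G}

theorem exists_ne_one_mem_centralizer [V.Normal] (hV : IsPGroup p V) (hne : V ≠ ⊥)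
    {S : Subgroup G} (hS : IsPGroup p S) : ∃ v ∈ V, v ≠ 1 ∧ S ≤ Subgroup.centralizer {v} := by
  let := MulAction.compHom V ((MulAut.conjNormal : G →* MulAut V).comp S.subtype)
  have := (Subgroup.nontrivial_iff_ne_bot V).2 hne
  obtain ⟨v, hv, hv₁⟩ := hS.exists_fixed_point_of_prime_dvd_card_of_fixed_point V
    (hV.card_eq_or_dvd.resolve_left (mt Subgroup.card_eq_one.1 hne)) (a := 1)
    fun s => map_one (MulAut.conjNormal (s : G) : MulAut V)
  refine ⟨v, v.2, fun h => hv₁ (Subtype.ext h.symm), fun s hs => ?_⟩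
  have hsv : s * v * s⁻¹ = v :=
    (MulAut.conjNormal_apply s v).symm.trans (congrArg Subtype.val (hv ⟨s, hs⟩))
  rw [Subgroup.mem_centralizer_singleton_iff]
  exact mul_inv_eq_iff_eq_mul.1 hsv

theorem IsMinimalNormal.centralizer_of_le_sup (hV : IsMinimalNormal V) (hVp : IsPGroup p V)
    {K S : Subgroup G} [K.Normal] (hS : IsPGroup p S) (hK : K ≤ S ⊔ Subgroup.centralizer V) :
    K ≤ Subgroup.centralizer V := by
  have := hV.1
  obtain ⟨v, hvV, hv₁, hSv⟩ := exists_ne_one_mem_centralizer hVp hV.2.1 hS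
  have hKv : K ≤ Subgroup.centralizer {v} :=
    hK.trans (sup_le hSv (Subgroup.centralizer_le (Set.singleton_subset_iff.2 hvV)))
  rw [Subgroup.le_centralizer_iff]
  refine (hV.eq_bot_or_le (Subgroup.centralizer K)).resolve_left fun hbot => hv₁ ?_
  refine Subgroup.mem_bot.1 (hbot ▸ ⟨Subgroup.mem_centralizer_iff.2 fun k hk => ?_, hvV⟩)
  exact Subgroup.mem_centralizer_singleton_iff.1 (hKv hk)

end CentralizeMinimalNormal

section FrattiniResidual

variable {G : Type*} [Group G] [Finite G] {p : ℕ} [hp : Fact p.Prime]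

theorem zmodUnitsResidual_le_centralizer_of_le_frattini {N : Subgroup G} (hN : IsMinimalNormal N)
    (hNp : IsPGroup p N) (hΦ : N ≤ frattini G) (hR : ssResidual G ≤ N)
    (hmin : ∀ S : Subgroup G, S.Normal → S ≠ ⊥ → N ≤ S) :
    zmodUnitsResidual p G ≤ Subgroup.centralizer N := by
  have := hN.1
  have hGN : IsSupersoluble (G ⧸ N) := isSupersoluble_quotient_iff_ssResidual_le.2 hR
  obtain ⟨K, hK, hpK, hDK⟩ := hGN.exists_normal_not_dvd_card p
  -- A normal subgroup `M / N` of prime order `q ≠ p` cannot exist: as `N ≤ Φ(G)`, the Frattini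
  -- argument would make a Sylow `q`-subgroup of `M` normal in `G`.
  have hK₀ : K = ⊥ := by
    by_contra hne
    obtain ⟨M', _, hM'K, hM'⟩ := hGN.exists_normal_le_prime_card hne
    obtain ⟨q, hq⟩ : ∃ q, Nat.card M' = q := ⟨_, rfl⟩
    have := Fact.mk (hq ▸ hM')
    let M := M'.comap (QuotientGroup.mk' N)
    have hrel : N.relIndex M = q := (relIndex_comap_mk' N M').trans hq
    obtain ⟨Q⟩ : Nonempty (Sylow q M) := inferInstance
    have hQ := sylow_normal_of_relIndex_eq_pow_of_le_frattini Q (k := 1) (by simpa using hrel) hΦ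
    have hqM : q ∣ Nat.card M :=
      hrel ▸ card_mul_relIndex (QuotientGroup.le_comap_mk' N M') ▸ dvd_mul_left _ _
    have hQ₀ : (Q : Subgroup M).map M.subtype ≠ ⊥ := by
      rw [Ne, Subgroup.map_eq_bot_iff_of_injective _ M.subtype_injective]
      exact Q.ne_bot_of_dvd_card hqM
    have hpq : p ≠ q := fun h => hpK (h ▸ hq ▸ Subgroup.card_dvd_of_le hM'K)
    have hdisj := IsPGroup.disjoint_of_ne p q hpq _ _ hNp (Q.2.map M.subtype)
    exact hN.2.1 (disjoint_self.1 (hdisj.mono_right (hmin _ hQ hQ₀)))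
  have hD : IsPGroup p (zmodUnitsResidual p G) := fun d => by
    obtain ⟨n, hn⟩ := hDK _ (map_mem_zmodUnitsResidual (QuotientGroup.mk' N) d.2)
    rw [hK₀, Subgroup.mem_bot, ← map_pow, QuotientGroup.mk'_apply, QuotientGroup.eq_one_iff] at hn
    obtain ⟨m, hm⟩ := hNp ⟨_, hn⟩
    refine ⟨n + m, Subtype.ext ?_⟩
    rw [pow_add, pow_mul]
    exact congrArg N.subtype hm
  exact hN.centralizer_of_le_sup hNp hD le_sup_left

end FrattiniResidual

theorem ssResidual_eq_bot_of_le_frattini (G : Type u) [Group G] [Finite G]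
    (h : ssResidual G ≤ frattini G) : ssResidual G = ⊥ := by
  induction hn : Nat.card G using Nat.strong_induction_on generalizing G with
  | _ n ih =>
    subst hn
    by_contra hne
    have hmin (S : Subgroup G) (_ : S.Normal) (hS : S ≠ ⊥) : ssResidual G ≤ S := by
      have hmap := map_ssResidual_of_surjective (QuotientGroup.mk'_surjective S)
      have := ih _ (card_quotient_lt hS) (G ⧸ S) (hmap ▸ Subgroup.map_le_iff_le_comap.2 (h.trans
        (frattini_le_comap_frattini_of_surjective (QuotientGroup.mk'_surjective S)))) rfl
      rwa [← hmap, Subgroup.map_eq_bot_iff, QuotientGroup.ker_mk'] at this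
    have hN : IsMinimalNormal (ssResidual G) :=
      ⟨inferInstance, hne, fun M hM hMR hM₀ => hMR.antisymm (hmin M hM hM₀)⟩
    have : Group.IsNilpotent (frattini G) := frattini_nilpotent
    have : Group.IsSolvable (ssResidual G) :=
      Group.isSolvable_of_isSolvable_injective (Subgroup.inclusion_injective h)
    have : IsMulCommutative (ssResidual G) :=
      Subgroup.le_centralizer_iff_isMulCommutative.1 hN.le_centralizer
    obtain ⟨p, hp, hexp⟩ := hN.exists_prime_pow_eq_one
    have := Fact.mk hp
    have hNp : IsPGroup p (ssResidual G) := fun x => ⟨1, by simpa using hexp x⟩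
    have hcard : Nat.card (ssResidual G) = p := hN.card_eq_prime hexp
      (zmodUnitsResidual_le_centralizer_of_le_frattini hN hNp h le_rfl hmin)
    have := isCyclic_of_prime_card hcard
    exact hne (isSupersoluble_iff_ssResidual_eq_bot.1 (.of_ssResidual_le le_rfl))

/-! ### Solubility of minimal nonsupersoluble groups -/

section Fusion

open scoped Pointwise

/-- The automizer `N_G(D) / C_G(D)` of every nontrivial `p`-subgroup `D` of `G` is a `p`-group.
This is the hypothesis of Frobenius' normal `p`-complement theorem, used here to exclude nonabelian
simple groups all of whose proper subgroups are supersoluble. -/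
def HasPGroupAutomizers (p : ℕ) (G : Type*) [Group G] : Prop :=
  ∀ D : Subgroup G, D ≠ ⊥ → IsPGroup p D →
    ∃ k, (Subgroup.centralizer D).relIndex (Subgroup.normalizer (D : Set G)) = p ^ k

variable {G : Type*} [Group G] [Finite G] {p : ℕ} [hp : Fact p.Prime]

theorem exists_mem_smul_sylow_eq_of_index_eq_pow {C : Subgroup G} [C.Normal] {k : ℕ}
    (h : C.index = p ^ k) (P Q : Sylow p G) : ∃ c ∈ C, c • P = Q := by
  obtain ⟨g, hg⟩ := MulAction.exists_smul_eq G P Q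
  have hgC : g ∈ (Q : Subgroup G) ⊔ C :=
    sylow_sup_eq_top_of_index_eq_pow Q h ▸ Subgroup.mem_top g
  obtain ⟨s, hs, c, hc, rfl⟩ := Subgroup.mem_sup_of_normal_right.1 hgC
  refine ⟨c, hc, ?_⟩
  rw [mul_smul, ← eq_inv_smul_iff] at hg
  rw [hg, Sylow.smul_eq_iff_mem_normalizer]
  exact inv_mem (Subgroup.le_normalizer hs)

theorem lt_inf_normalizer_of_lt {D P : Subgroup G} (hP : IsPGroup p P) (h : D < P) :
    D < P ⊓ Subgroup.normalizer (D : Set G) := by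
  have := hP.isNilpotent
  have hlt := Group.normalizerCondition_of_isNilpotent (D.subgroupOf P)
    (lt_top_iff_ne_top.2 fun ht => h.not_ge (Subgroup.subgroupOf_eq_top.1 ht))
  rw [← Subgroup.subgroupOf_normalizer_eq h.le] at hlt
  refine (le_inf h.le Subgroup.le_normalizer).lt_of_ne fun heq => hlt.ne ?_
  rw [heq, Subgroup.inf_subgroupOf_left, ← heq]

namespace HasPGroupAutomizers

theorem exists_conj_le_sylow (hG : HasPGroupAutomizers p G) {D A B : Subgroup G} (hD : D ≠ ⊥)
    (hDp : IsPGroup p D) (hA : IsPGroup p A) (hB : IsPGroup p B)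
    (hAD : A ≤ Subgroup.normalizer (D : Set G)) (hBD : B ≤ Subgroup.normalizer (D : Set G)) :
    ∃ c ∈ Subgroup.centralizer (D : Set G), ∃ T : Sylow p G, MulAut.conj c • A ≤ T ∧ B ≤ T := by
  let X := Subgroup.normalizer (D : Set G)
  obtain ⟨k, hk⟩ := hG D hD hDp
  have hC : ((Subgroup.centralizer (D : Set G)).subgroupOf X).Normal :=
    D.normalizerMonoidHom_ker ▸ MonoidHom.normal_ker _
  obtain ⟨S, hS⟩ := (hA.comap_subtype (K := X)).exists_le_sylow
  obtain ⟨S', hS'⟩ := (hB.comap_subtype (K := X)).exists_le_sylow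
  obtain ⟨c, hc, hcS⟩ := exists_mem_smul_sylow_eq_of_index_eq_pow (p := p) hk S S'
  obtain ⟨T, hT⟩ := (S'.2.map X.subtype).exists_le_sylow
  refine ⟨c, hc, T, ?_, fun b hb => hT ⟨⟨b, hBD hb⟩, hS' hb, rfl⟩⟩
  rintro _ ⟨a, ha, rfl⟩
  have haS' : MulAut.conj c ⟨a, hAD ha⟩ ∈ (S' : Subgroup X) := by
    rw [← hcS, Sylow.coe_subgroup_smul]
    exact Subgroup.smul_mem_pointwise_smul _ _ _ (hS ha)
  exact hT ⟨_, haS', rfl⟩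

theorem exists_mem_centralizer_inf_smul_eq (hG : HasPGroupAutomizers p G) (P Q : Sylow p G) :
    ∃ c ∈ Subgroup.centralizer (((P : Subgroup G) ⊓ Q : Subgroup G) : Set G), c • P = Q := by
  induction hn : Nat.card G - Nat.card ((P : Subgroup G) ⊓ Q : Subgroup G)
    using Nat.strong_induction_on generalizing P Q with
  | _ n ih =>
    subst hn
    by_cases hPQ : P = Q
    · exact ⟨1, one_mem _, by rw [one_smul, hPQ]⟩
    set D := (P : Subgroup G) ⊓ Q
    by_cases hD₀ : D = ⊥
    · obtain ⟨c, hc⟩ := MulAction.exists_smul_eq G P Q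
      exact ⟨c, by simp [hD₀, Subgroup.mem_centralizer_iff], hc⟩
    have hDP : D < P := inf_le_left.lt_of_ne fun h =>
      hPQ (Sylow.ext (P.3 Q.2 (inf_eq_left.1 h))).symm
    have hDQ : D < Q := inf_le_right.lt_of_ne fun h => hPQ (Sylow.ext (Q.3 P.2 (inf_eq_right.1 h)))
    have hA := lt_inf_normalizer_of_lt P.2 hDP
    have hB := lt_inf_normalizer_of_lt Q.2 hDQ
    -- Both `P` and `Q` meet `N_G(D)` in more than `D`, so after conjugating `P` by `c ∈ C_G(D)`
    -- some Sylow subgroup `T` meets both of them in larger subgroups than `D`.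
    obtain ⟨c, hc, T, hAT, hBT⟩ := hG.exists_conj_le_sylow hD₀ (P.2.to_le hDP.le)
      (P.2.to_le inf_le_left) (Q.2.to_le inf_le_left) inf_le_right inf_le_right
    have hmeas {S S' : Sylow p G} {E : Subgroup G} (hE : Nat.card D < Nat.card E)
        (hES : E ≤ (S : Subgroup G) ⊓ S') :
        Nat.card G - Nat.card ((S : Subgroup G) ⊓ S' : Subgroup G) < Nat.card G - Nat.card D := by
      have := Subgroup.card_le_of_le hES
      have := Subgroup.card_le_card_group ((S : Subgroup G) ⊓ S')
      omega
    have hAT' : MulAut.conj c • ((P : Subgroup G) ⊓ Subgroup.normalizer (D : Set G)) ≤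
        ((c • P : Sylow p G) : Subgroup G) ⊓ T :=
      le_inf (Subgroup.pointwise_smul_le_pointwise_smul_iff.2 inf_le_left) hAT
    have hDcP : D ≤ ((c • P : Sylow p G) : Subgroup G) ⊓ T := fun d hd => hAT'
      ⟨d, hA.le hd, mul_inv_eq_iff_eq_mul.2 (Subgroup.mem_centralizer_iff.1 hc d hd).symm⟩
    have hDT : D ≤ (T : Subgroup G) ⊓ Q := hB.le.trans (le_inf hBT inf_le_left)
    obtain ⟨c₁, hc₁, hc₁T⟩ := ih _ (hmeas ((Set.ncard_lt_ncard hA).trans_eq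
      (Nat.card_congr (Subgroup.equivSMul (MulAut.conj c) _).toEquiv)) hAT') (c • P) T rfl
    obtain ⟨c₂, hc₂, hc₂Q⟩ := ih _ (hmeas (Set.ncard_lt_ncard hB) (le_inf hBT inf_le_left)) T Q rfl
    refine ⟨c₂ * (c₁ * c), mul_mem (Subgroup.centralizer_le hDT hc₂)
      (mul_mem (Subgroup.centralizer_le hDcP hc₁) hc), ?_⟩
    rw [mul_smul, mul_smul, hc₁T, hc₂Q]

theorem exists_mem_sylow_conj_eq (hG : HasPGroupAutomizers p G) (P : Sylow p G) {x u : G}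
    (hx : x ∈ P) (hux : u * x * u⁻¹ ∈ P) : ∃ s ∈ P, u * x * u⁻¹ = s * x * s⁻¹ := by
  obtain rfl | hx₁ := eq_or_ne x 1
  · exact ⟨1, one_mem _, by simp⟩
  obtain ⟨k, hk⟩ := hG P (fun h => hx₁ (Subgroup.mem_bot.1 (h ▸ hx))) P.2
  let X := Subgroup.normalizer ((P : Subgroup G) : Set G)
  obtain ⟨c, hc, hcP⟩ := hG.exists_mem_centralizer_inf_smul_eq (u • P) P
  have hcx : c * (u * x * u⁻¹) = u * x * u⁻¹ * c :=
    (Subgroup.mem_centralizer_iff.1 hc _ ⟨⟨x, hx, rfl⟩, hux⟩).symm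
  rw [← mul_smul, Sylow.smul_eq_iff_mem_normalizer] at hcP
  have hC : ((Subgroup.centralizer ((P : Subgroup G) : Set G)).subgroupOf X).Normal :=
    (P : Subgroup G).normalizerMonoidHom_ker ▸ MonoidHom.normal_ker _
  have hcu : (⟨c * u, hcP⟩ : X) ∈ ((P.subtype Subgroup.le_normalizer : Sylow p X) : Subgroup X) ⊔
      (Subgroup.centralizer ((P : Subgroup G) : Set G)).subgroupOf X :=
    sylow_sup_eq_top_of_index_eq_pow _ hk ▸ Subgroup.mem_top _
  obtain ⟨⟨s, _⟩, hs, ⟨l, _⟩, hl, hsl⟩ := Subgroup.mem_sup_of_normal_right.1 hcu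
  have hcu_eq : c * u = s * l := (congrArg Subtype.val hsl).symm
  have hlx : x * l = l * x := Subgroup.mem_centralizer_iff.1 hl x hx
  refine ⟨s, hs, ?_⟩
  calc u * x * u⁻¹ = c * (u * x * u⁻¹) * c⁻¹ := by rw [hcx, mul_inv_cancel_right]
    _ = (c * u) * x * (c * u)⁻¹ := by group
    _ = s * (l * x) * l⁻¹ * s⁻¹ := by rw [hcu_eq]; group
    _ = s * x * s⁻¹ := by rw [← hlx]; group

theorem focalSubgroup_le_commutator (hG : HasPGroupAutomizers p G) (P : Sylow p G) :
    Subgroup.focalSubgroup (P : Subgroup G) ≤ ⁅(P : Subgroup G), (P : Subgroup G)⁆ := by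
  rw [Subgroup.focalSubgroup_def, Subgroup.closure_le]
  rintro _ ⟨hg, x, hx, u, rfl⟩
  have hux : u * x⁻¹ * u⁻¹ ∈ (P : Subgroup G) := by
    have := mul_mem (inv_mem hx) hg
    rwa [commutatorElement_def, ← mul_assoc, ← mul_assoc, inv_mul_cancel_left] at this
  obtain ⟨s, hs, hus⟩ := hG.exists_mem_sylow_conj_eq P (inv_mem hx) hux
  have : ⁅x, u⁆ = ⁅x, s⁆ := by
    simpa only [commutatorElement_def, mul_assoc] using congrArg (x * ·) hus
  exact this ▸ Subgroup.commutator_mem_commutator hx hs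

theorem of_isSupersoluble_normalizer
    (hmin : ∀ q, q.Prime → q ∣ Nat.card G → p ≤ q)
    (h : ∀ D : Subgroup G, D ≠ ⊥ → IsPGroup p D →
      IsSupersoluble (Subgroup.normalizer (D : Set G))) : HasPGroupAutomizers p G := by
  intro D hD hDp
  let X := Subgroup.normalizer (D : Set G)
  obtain ⟨L, hL, hLπ⟩ := (h D hD hDp).exists_normal_isHall_Ici (p + 1)
  have hLp : ¬ p ∣ Nat.card L := fun hdvd =>
    (Nat.lt_succ_self p).not_ge (hLπ.mem_of_dvd_card _ hp.out hdvd)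
  obtain ⟨k, hk⟩ : ∃ k, L.index = p ^ k := ⟨_, Nat.eq_prime_pow_of_unique_prime_dvd
    Subgroup.index_ne_zero_of_finite fun {q} hq hqL => le_antisymm
      (Nat.lt_succ_iff.1 (not_le.1 (hLπ.notMem_of_dvd_index _ hq hqL)))
      (hmin q hq (hqL.trans (L.index_dvd_card.trans X.card_subgroup_dvd_card)))⟩
  have hdisj : Disjoint (D.subgroupOf X) L := by
    obtain ⟨n, hn⟩ := IsPGroup.iff_card.1 (hDp.comap_subtype (K := X))
    exact Subgroup.disjoint_of_coprime_natCard
      (hn ▸ ((hp.out.coprime_iff_not_dvd).2 hLp).pow_left n)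
  have hDX : (D.subgroupOf X).Normal := inferInstance
  have hLC : L ≤ (Subgroup.centralizer (D : Set G)).subgroupOf X := fun l hl =>
    Subgroup.mem_centralizer_iff.2 fun d hd => congrArg Subtype.val
      (Subgroup.commute_of_normal_of_disjoint _ L hDX hL hdisj
        ⟨d, Subgroup.le_normalizer hd⟩ l hd hl)
  obtain ⟨m, -, hm⟩ := (Nat.dvd_prime_pow hp.out).1 (hk ▸ Subgroup.index_dvd_of_le hLC)
  exact ⟨m, hm⟩

end HasPGroupAutomizers

end Fusion

theorem isSolvable_of_isSimpleGroup_of_forall_isSupersoluble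
    {G : Type*} [Group G] [Finite G] [IsSimpleGroup G]
    (h : ∀ H : Subgroup G, H ≠ ⊤ → IsSupersoluble H) : Group.IsSolvable G := by
  obtain ⟨p, hp⟩ : ∃ p, (Nat.card G).minFac = p := ⟨_, rfl⟩
  have := Fact.mk (hp ▸ Nat.minFac_prime (Finite.one_lt_card (α := G)).ne')
  obtain ⟨P⟩ : Nonempty (Sylow p G) := inferInstance
  have hP : (P : Subgroup G) ≠ ⊥ := P.ne_bot_of_dvd_card (hp ▸ Nat.minFac_dvd _)
  have : Group.IsNilpotent P := P.2.isNilpotent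
  by_cases hN : ∃ D : Subgroup G, D ≠ ⊥ ∧ IsPGroup p D ∧ Subgroup.normalizer (D : Set G) = ⊤
  · obtain ⟨D, hD, hDp, hDN⟩ := hN
    have hD_top := (Subgroup.normalizer_eq_top_iff.1 hDN).eq_bot_or_eq_top.resolve_left hD
    have := hDp.isNilpotent
    subst hD_top
    exact Group.isSolvable_of_isSolvable_injective
      (f := (Subgroup.topEquiv (G := G)).symm.toMonoidHom) Subgroup.topEquiv.symm.injective
  push Not at hN
  have hG : HasPGroupAutomizers p G := HasPGroupAutomizers.of_isSupersoluble_normalizer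
    (fun q hq hqG => hp ▸ Nat.minFac_le_of_dvd hq.two_le hqG) fun D hD hDp => h _ (hN D hD hDp)
  by_contra hsol
  have hcomm : _root_.commutator G = ⊤ :=
    (Subgroup.Normal.eq_bot_or_eq_top inferInstance).resolve_left fun hbot =>
      hsol ⟨1, (derivedSeries_one G).trans hbot⟩
  have hfocal := hG.focalSubgroup_le_commutator P
  rw [← Subgroup.commutator_inf_eq_focalSubgroup, hcomm, top_inf_eq] at hfocal
  have := (Subgroup.nontrivial_iff_ne_bot (P : Subgroup G)).2 hP
  have hlt := map_subtype_lt (Group.IsSolvable.commutator_lt_top_of_nontrivial P)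
  rw [Subgroup.map_subtype_commutator] at hlt
  exact hlt.not_ge hfocal

theorem forall_isSupersoluble_quotient {G : Type*} [Group G] {N : Subgroup G} [N.Normal]
    (h : ∀ H : Subgroup G, H ≠ ⊤ → IsSupersoluble H) (H : Subgroup (G ⧸ N)) (hH : H ≠ ⊤) :
    IsSupersoluble H := by
  have hπ := QuotientGroup.mk'_surjective N
  refine (h (H.comap (QuotientGroup.mk' N)) fun htop => hH ?_).of_surjective
    ((QuotientGroup.mk' N).subgroupComap_surjective_of_surjective H hπ)
  rw [← Subgroup.map_comap_eq_self_of_surjective hπ H, htop, Subgroup.map_top_of_surjective _ hπ]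

theorem isSolvable_of_forall_isSupersoluble (G : Type u) [Group G] [Finite G]
    (h : ∀ H : Subgroup G, H ≠ ⊤ → IsSupersoluble H) : Group.IsSolvable G := by
  induction hn : Nat.card G using Nat.strong_induction_on generalizing G with
  | _ n ih =>
    subst hn
    by_cases hN : ∃ N : Subgroup G, N.Normal ∧ N ≠ ⊥ ∧ N ≠ ⊤
    · obtain ⟨N, _, hN₀, hN₁⟩ := hN
      have := (h N hN₁).isSolvable
      have : Group.IsSolvable (G ⧸ N) :=
        ih _ (card_quotient_lt hN₀) _ (forall_isSupersoluble_quotient h) rfl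
      exact (Group.isSolvable_iff_subgroup_quotient N).2 ⟨inferInstance, inferInstance⟩
    · cases subsingleton_or_nontrivial G
      · infer_instance
      have : IsSimpleGroup G := ⟨fun K hK => by
        by_contra! hne
        exact hN ⟨K, hK, hne⟩⟩
      exact isSolvable_of_isSimpleGroup_of_forall_isSupersoluble h

theorem IsMinimalNonsupersoluble.isSolvable {G : Type*} [Group G] [Finite G]
    (hG : IsMinimalNonsupersoluble G) : Group.IsSolvable G :=
  isSolvable_of_forall_isSupersoluble G hG.2

/-! ### Complements of the residual in SDH-groups -/

section Dedekind

variable {G : Type*} [Group G]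

theorem le_of_le_sup_of_inf_le {H M V : Subgroup G} [V.Normal] (hHM : H ≤ M) (hinf : M ⊓ V ≤ H)
    (h : M ≤ H ⊔ V) : M ≤ H := by
  intro m hm
  obtain ⟨a, ha, v, hv, rfl⟩ := Subgroup.mem_sup_of_normal_right.1 (h hm)
  exact mul_mem ha (hinf ⟨(Subgroup.mul_mem_cancel_left M (hHM ha)).1 hm, hv⟩)

theorem normal_map_subtype_sup {M V : Subgroup G} [V.Normal] (h : M ⊔ V = ⊤) (W : Subgroup M)
    [hW : W.Normal] : (W.map M.subtype ⊔ V).Normal := by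
  have := (hW.map _ (surjective_mk'_comp_subtype h)).comap (QuotientGroup.mk' V)
  rwa [← Subgroup.map_map, QuotientGroup.comap_map_mk', sup_comm] at this

theorem IsMinimalNormal.inf_eq_bot_of_sup_eq_top {M V : Subgroup G} (hV : IsMinimalNormal V)
    (hVc : V ≤ Subgroup.centralizer V) (hVM : ¬ V ≤ M) (h : M ⊔ V = ⊤) : M ⊓ V = ⊥ := by
  have := hV.1
  have hM : M ≤ Subgroup.normalizer ((M ⊓ V : Subgroup G) : Set G) :=
    (le_inf Subgroup.le_normalizer Subgroup.le_normalizer_of_normal).trans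
      Subgroup.inf_normalizer_le_normalizer_inf
  have hVn : V ≤ Subgroup.normalizer ((M ⊓ V : Subgroup G) : Set G) :=
    hVc.trans ((Subgroup.centralizer_le inf_le_right).trans
      (Subgroup.centralizer_le_normalizer _))
  have : (M ⊓ V).Normal := Subgroup.normalizer_eq_top_iff.1 (top_le_iff.1 (h ▸ sup_le hM hVn))
  simpa using (hV.eq_bot_or_le (M ⊓ V)).resolve_right fun hle => hVM (hle.trans inf_le_left)

end Dedekind

section Frattini

variable {G : Type*} [Group G] [Finite G]

theorem eq_bot_of_coprime_index_of_le_frattini {W : Subgroup G} [W.Normal]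
    (h : (Nat.card W).Coprime W.index) (hW : W ≤ frattini G) : W = ⊥ := by
  obtain ⟨K, hK⟩ := Subgroup.exists_right_complement'_of_coprime h
  have hKtop : K = ⊤ := frattini_nongenerating
    (top_le_iff.1 (hK.sup_eq_top.ge.trans (sup_le (hW.trans le_sup_right) le_sup_left)))
  subst hKtop
  exact Subgroup.isComplement'_top_right.1 hK

theorem not_dvd_card_of_le_frattini {N : Subgroup G} [N.Normal] {p : ℕ} [hp : Fact p.Prime]
    (hN : N ≤ frattini G) (h : ¬ p ∣ N.index) : ¬ p ∣ Nat.card N := by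
  obtain ⟨P⟩ : Nonempty (Sylow p N) := inferInstance
  have := sylow_normal_of_relIndex_eq_pow_of_le_frattini P (k := 0) (by simp) hN
  obtain ⟨k, hk⟩ := IsPGroup.iff_card.1 P.2
  have hcard : Nat.card ((P : Subgroup N).map N.subtype) = p ^ k :=
    (Subgroup.card_subtype N P).trans hk
  have hindex : ¬ p ∣ ((P : Subgroup N).map N.subtype).index := by
    rw [Subgroup.index_map_subtype, hp.out.dvd_mul]
    exact not_or.2 ⟨P.not_dvd_index, h⟩
  have hbot := eq_bot_of_coprime_index_of_le_frattini
    (hcard ▸ ((hp.out.coprime_iff_not_dvd.2 hindex).pow_left k))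
    ((Subgroup.map_subtype_le _).trans hN)
  intro hdvd
  exact P.ne_bot_of_dvd_card hdvd ((Subgroup.map_eq_bot_iff_of_injective _
    N.subtype_injective).1 hbot)

end Frattini

section SDH

variable {G : Type*} [Group G] [Finite G] {p : ℕ} [hp : Fact p.Prime]

theorem IsSupersoluble.le_centralizer_of_isPGroup {X V H : Subgroup G} [V.Normal]
    (h : IsSupersoluble X) (hHX : H ≤ X) (hVX : V ≤ X) (hV : IsPGroup p V)
    (hH : ∀ q : ℕ, q.Prime → q ∣ Nat.card H → p < q) : H ≤ Subgroup.centralizer V := by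
  obtain ⟨L, hL, hLp⟩ := h.exists_normal_isHall_Ici (p + 1)
  have hHL : H.subgroupOf X ≤ L := le_of_coprime_index <| by
    rw [Nat.card_congr (Subgroup.subgroupOfEquivOfLe hHX).toEquiv]
    exact Nat.coprime_of_dvd fun q hq hqH hqL =>
      hLp.notMem_of_dvd_index q hq hqL (hH q hq hqH)
  have hpL : ¬ p ∣ Nat.card L := fun hdvd =>
    absurd (hLp.mem_of_dvd_card p hp.out hdvd) (by simp)
  obtain ⟨k, hk⟩ := IsPGroup.iff_card.1 hV
  have hdisj : Disjoint L (V.subgroupOf X) := Subgroup.disjoint_of_coprime_natCard <| by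
    rw [Nat.card_congr (Subgroup.subgroupOfEquivOfLe hVX).toEquiv, hk]
    exact ((hp.out.coprime_iff_not_dvd.2 hpL).pow_left k).symm
  exact fun x hx v hv => (congrArg Subtype.val (Subgroup.commute_of_normal_of_disjoint _ _ hL
    inferInstance hdisj ⟨x, hHX hx⟩ ⟨v, hVX hv⟩ (hHL hx) hv)).symm

theorem IsSupersoluble.exists_le_normalizer_prime_card {X V : Subgroup G} [V.Normal]
    (h : IsSupersoluble X) (hVX : V ≤ X) (hne : V ≠ ⊥) :
    ∃ N ≤ V, (Nat.card N).Prime ∧ X ≤ Subgroup.normalizer N := by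
  obtain ⟨N, hN, hNV, hNp⟩ := h.exists_normal_le_prime_card (N := V.subgroupOf X)
    (by rwa [Ne, Subgroup.subgroupOf_eq_bot, disjoint_iff, inf_eq_left.2 hVX])
  have hNX : (N.map X.subtype).subgroupOf X = N :=
    Subgroup.comap_map_eq_self_of_injective X.subtype_injective N
  refine ⟨N.map X.subtype, Subgroup.map_le_iff_le_comap.2 hNV, ?_, ?_⟩
  · rwa [Subgroup.card_subtype]
  · rw [← Subgroup.normal_subgroupOf_iff_le_normalizer (Subgroup.map_subtype_le N), hNX]
    exact hN

theorem IsHall.exists_isPGroup_le_sup {Q W : Subgroup G} [Q.Normal]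
    (hQ : IsHall (Set.Ici (p + 1)) Q) (hW : IsHall (Set.Ici p) W) :
    ∃ S : Subgroup G, IsPGroup p S ∧ W ≤ S ⊔ Q := by
  have eq_p (q : ℕ) (hq : q.Prime) (hdvd : q ∣ Q.relIndex W) : q = p :=
    le_antisymm
      (by simpa using hQ.notMem_of_dvd_index q hq (hdvd.trans (Q.relIndex_dvd_index_of_normal W)))
      (hW.mem_of_dvd_card q hq (hdvd.trans (Q.relIndex_dvd_card W)))
  obtain ⟨S⟩ : Nonempty (Sylow p W) := inferInstance
  have hS := sylow_sup_eq_top_of_index_eq_pow S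
    (Nat.eq_prime_pow_of_unique_prime_dvd Subgroup.index_ne_zero_of_finite (eq_p _))
  refine ⟨(S : Subgroup W).map W.subtype, S.2.map _, ?_⟩
  exact (map_subtype_sup_map_subtype hS).ge.trans (sup_le_sup_left (Subgroup.map_comap_le _ _) _)

namespace IsSDH

variable {M : Subgroup G}

theorem ssResidual_le_centralizer (hG : IsSDH G) :
    ssResidual G ≤ Subgroup.centralizer (ssResidual G) :=
  have := hG.1.isSolvable
  hG.2.le_centralizer

theorem exists_isPGroup_ssResidual (hG : IsSDH G) :
    ∃ p : ℕ, p.Prime ∧ IsPGroup p (ssResidual G) := by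
  have := Subgroup.le_centralizer_iff_isMulCommutative.1 hG.ssResidual_le_centralizer
  obtain ⟨p, hp, hexp⟩ := hG.2.exists_prime_pow_eq_one
  exact ⟨p, hp, fun x => ⟨1, by rw [pow_one, hexp]⟩⟩

theorem sup_ssResidual_ne_top (hG : IsSDH G) (hM : IsCoatom M) (hR : ¬ ssResidual G ≤ M)
    {H : Subgroup G} (hHM : H < M) : H ⊔ ssResidual G ≠ ⊤ := by
  intro htop
  have hinf : M ⊓ ssResidual G = ⊥ :=
    hG.2.inf_eq_bot_of_sup_eq_top hG.ssResidual_le_centralizer hR (hM.2 _ (left_lt_sup.2 hR))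
  exact hHM.not_ge (le_of_le_sup_of_inf_le hHM.le (hinf ▸ bot_le) (htop ▸ le_top))

theorem isSupersoluble_sup_ssResidual (hG : IsSDH G) (hM : IsCoatom M) (hR : ¬ ssResidual G ≤ M)
    {H : Subgroup G} (hHM : H < M) : IsSupersoluble (H ⊔ ssResidual G : Subgroup G) :=
  hG.1.2 _ (hG.sup_ssResidual_ne_top hM hR hHM)

theorem centralizer_subgroupOf_le_frattini (hG : IsSDH G) (hM : IsCoatom M)
    (hR : ¬ ssResidual G ≤ M) :
    (Subgroup.centralizer (ssResidual G : Set G)).subgroupOf M ≤ frattini M := by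
  refine le_iInf₂ fun H (hH : IsCoatom H) => ?_
  by_contra hle
  obtain ⟨N, hN, hNp, hXN⟩ := (hG.isSupersoluble_sup_ssResidual hM hR
    (map_subtype_lt hH.lt_top)).exists_le_normalizer_prime_card le_sup_right hG.2.2.1
  have hCN : Subgroup.centralizer (ssResidual G : Set G) ≤ Subgroup.normalizer (N : Set G) :=
    (Subgroup.centralizer_le hN).trans (Subgroup.centralizer_le_normalizer _)
  have hMN : M ≤ Subgroup.normalizer (N : Set G) := by
    rw [← map_subtype_sup_map_subtype (hH.2 _ (left_lt_sup.2 hle))]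
    exact sup_le (le_sup_left.trans hXN) ((Subgroup.map_comap_le _ _).trans hCN)
  have hNn : N.Normal := Subgroup.normalizer_eq_top_iff.1 (top_le_iff.1
    ((hM.2 _ (left_lt_sup.2 hR)).ge.trans (sup_le hMN (le_sup_right.trans hXN))))
  have := Fact.mk hNp
  have := isCyclic_of_prime_card (α := N) rfl
  have hNR : N = ssResidual G := hG.2.2.2 N hNn hN fun h => by
    simp [h, Nat.not_prime_one] at hNp
  exact hG.1.1 (.of_ssResidual_le hNR.ge)

theorem not_dvd_card_of_isCoatom (hG : IsSDH G) (hRp : IsPGroup p (ssResidual G))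
    (hM : IsCoatom M) (hR : ¬ ssResidual G ≤ M) : ¬ p ∣ Nat.card M := by
  intro hpM
  have hMs := hG.1.2 M hM.1
  obtain ⟨Q, _, hQ⟩ := hMs.exists_normal_isHall_Ici (p + 1)
  obtain ⟨W, _, hW⟩ := hMs.exists_normal_isHall_Ici p
  have hQ_top : Q < ⊤ := lt_top_iff_ne_top.2 fun h =>
    absurd (hQ.mem_of_dvd_card p hp.out (by rwa [h, Subgroup.card_top])) (by simp)
  have hQC : Q.map M.subtype ≤ Subgroup.centralizer (ssResidual G) :=
    (hG.isSupersoluble_sup_ssResidual hM hR (map_subtype_lt hQ_top)).le_centralizer_of_isPGroup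
      le_sup_left le_sup_right hRp fun q hq hdvd => hQ.mem_of_dvd_card q hq
        (Subgroup.card_subtype M Q ▸ hdvd)
  have hWC : W.map M.subtype ≤ Subgroup.centralizer (ssResidual G) := by
    obtain ⟨S, hS, hWS⟩ := hQ.exists_isPGroup_le_sup hW
    have := normal_map_subtype_sup (hM.2 _ (left_lt_sup.2 hR)) W
    refine (le_sup_left (b := ssResidual G)).trans
      (hG.2.centralizer_of_le_sup hRp (hS.map M.subtype) (sup_le ?_ ?_))
    · exact (Subgroup.map_mono hWS).trans
        ((Subgroup.map_sup _ _ _).trans_le (sup_le_sup_left hQC _))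
    · exact hG.ssResidual_le_centralizer.trans le_sup_right
  have hW_bot : W = ⊥ := eq_bot_of_coprime_index_of_le_frattini hW.coprime
    ((Subgroup.map_le_iff_le_comap.1 hWC).trans (hG.centralizer_subgroupOf_le_frattini hM hR))
  refine hW.notMem_of_dvd_index p hp.out ?_ (Set.self_mem_Ici)
  rwa [hW_bot, Subgroup.index_bot]

end IsSDH

end SDH

/-! ### Chains from 2-maximal subgroups -/

section TwoMaximal

variable {G : Type*} [Group G] {H M : Subgroup G}

theorem isMaximalIn_iff :
    IsMaximalIn H M ↔ ∃ K : Subgroup M, IsCoatom K ∧ K.map M.subtype = H := by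
  constructor
  · exact fun ⟨hle, hH⟩ => ⟨H.subgroupOf M, hH, Subgroup.map_subgroupOf_eq_of_le hle⟩
  · rintro ⟨K, hK, rfl⟩
    refine ⟨Subgroup.map_subtype_le K, ?_⟩
    rwa [Subgroup.subgroupOf, Subgroup.comap_map_eq_self_of_injective M.subtype_injective]

theorem isMaximalIn_top_iff : IsMaximalIn M ⊤ ↔ IsCoatom M := by
  rw [IsMaximalIn, and_iff_right le_top]
  exact Subgroup.isCoatom_comap Subgroup.topEquiv

theorem isNMaximal_two_iff :
    IsNMaximal 2 H ↔
      ∃ M : Subgroup G, IsCoatom M ∧ ∃ K : Subgroup M, IsCoatom K ∧ K.map M.subtype = H := by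
  simp only [IsNMaximal, exists_eq_left, isMaximalIn_top_iff]
  simp only [isMaximalIn_iff]

end TwoMaximal

/-- A single step `A ≤ B` of a chain witnessing `K`-`𝔘`-subnormality, which makes that notion the
reflexive transitive closure of a relation on subgroups. -/
def KUStep {G : Type*} [Group G] (A B : Subgroup G) : Prop :=
  A ≤ B ∧ ((A.subgroupOf B).Normal ∨ IsSupersoluble (B ⧸ (A.subgroupOf B).normalCore))

section KUSubnormal

variable {G : Type*} [Group G] {A B H M : Subgroup G}

theorem isKUSubnormal_iff_reflTransGen :
    IsKUSubnormal H ↔ Relation.ReflTransGen KUStep H ⊤ :=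
  exists_chain_iff_reflTransGen (r := KUStep)

theorem exists_step_of_reflTransGen {α : Type*} [Preorder α] {r : α → α → Prop}
    (hr : ∀ x y, r x y → x ≤ y) {a b m : α} (h : Relation.ReflTransGen r a b) (hmb : m ≤ b)
    (hma : ¬ m ≤ a) : ∃ x y, r x y ∧ a ≤ x ∧ ¬ m ≤ x ∧ m ≤ y := by
  induction h using Relation.ReflTransGen.head_induction_on with
  | refl => exact absurd hmb hma
  | @head a c hac _ ih =>
    by_cases hmc : m ≤ c
    · exact ⟨a, c, hac, le_rfl, hma, hmc⟩
    · obtain ⟨x, y, hxy, hcx, hmx, hmy⟩ := ih hmc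
      exact ⟨x, y, hxy, (hr _ _ hac).trans hcx, hmx, hmy⟩

variable [Finite G]

theorem kuStep_iff :
    KUStep A B ↔ A ≤ B ∧ ((A.subgroupOf B).Normal ∨ ssResidual B ≤ A.subgroupOf B) := by
  rw [KUStep, isSupersoluble_quotient_iff_ssResidual_le, Subgroup.normal_le_normalCore]

theorem KUStep.of_isSupersoluble (h : A ≤ B) (hB : IsSupersoluble B) : KUStep A B :=
  kuStep_iff.2 ⟨h, .inr (isSupersoluble_iff_ssResidual_eq_bot.1 hB ▸ bot_le)⟩

theorem KUStep.normal_or_ssResidual_le (h : KUStep A B) (hMB : M ≤ B) :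
    (A.subgroupOf M).Normal ∨ ssResidual M ≤ A.subgroupOf M :=
  (kuStep_iff.1 h).2.imp (fun hA => hA.comap (Subgroup.inclusion hMB)) fun hA =>
    (Subgroup.map_le_iff_le_comap.1 (map_ssResidual_le (Subgroup.inclusion hMB))).trans
      (Subgroup.comap_mono hA)

theorem kuStep_top_iff : KUStep A ⊤ ↔ A.Normal ∨ ssResidual G ≤ A := by
  have hf : Function.Surjective (⊤ : Subgroup G).subtype := fun x => ⟨⟨x, trivial⟩, rfl⟩
  rw [kuStep_iff, and_iff_right le_top, ← map_ssResidual_of_surjective hf,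
    Subgroup.map_le_iff_le_comap]
  refine or_congr_left ⟨fun h => ?_, fun h => h.subgroupOf ⊤⟩
  simpa [Subgroup.map_subgroupOf_eq_of_le le_top] using h.map _ hf

theorem ssResidual_le_of_isCoatom_of_isKUSubnormal {K : Subgroup M} (hK : IsCoatom K)
    (h : IsKUSubnormal (K.map M.subtype)) : ssResidual M ≤ K := by
  obtain ⟨X, Y, hXY, hKX, hMX, hMY⟩ := exists_step_of_reflTransGen (fun _ _ hAB => hAB.1)
    (isKUSubnormal_iff_reflTransGen.1 h) le_top (map_subtype_lt hK.lt_top).not_ge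
  obtain hX | rfl := hK.le_iff.1 (Subgroup.map_le_iff_le_comap.1 hKX)
  · exact absurd (Subgroup.subgroupOf_eq_top.1 hX) hMX
  · obtain hX | hR := hXY.normal_or_ssResidual_le hMY
    · have : (Subgroup.comap M.subtype X).Normal := hX
      exact ssResidual_le_of_isCoatom hK
    · exact hR

theorem IsKUSubnormal.exists_le_normal_or_ssResidual_le (h : IsKUSubnormal H) (hH : H ≠ ⊤) :
    ∃ L : Subgroup G, H ≤ L ∧ L ≠ ⊤ ∧ (L.Normal ∨ ssResidual G ≤ L) := by
  obtain ⟨L, Y, hLY, hHL, hL, hY⟩ := exists_step_of_reflTransGen (fun _ _ hAB => hAB.1)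
    (isKUSubnormal_iff_reflTransGen.1 h) le_rfl (mt top_le_iff.1 hH)
  obtain rfl := top_le_iff.1 hY
  exact ⟨L, hHL, mt top_le_iff.2 hL, kuStep_top_iff.1 hLY⟩

end KUSubnormal

theorem IsSupersoluble.isKUSubnormal {G : Type*} [Group G] [Finite G] (h : IsSupersoluble G)
    (H : Subgroup G) : IsKUSubnormal H :=
  isKUSubnormal_iff_reflTransGen.2 (.single (kuStep_top_iff.2
    (.inr (isSupersoluble_iff_ssResidual_eq_bot.1 h ▸ bot_le))))

section Minimality

theorem isMinimalNonsupersoluble_of_forall_isKUSubnormal {G : Type*} [Group G] [Finite G]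
    (hG : ¬ IsSupersoluble G) (h : ∀ H : Subgroup G, IsNMaximal 2 H → IsKUSubnormal H) :
    IsMinimalNonsupersoluble G := by
  refine ⟨hG, fun K hK => ?_⟩
  obtain ⟨M, hM, hKM⟩ := (eq_top_or_exists_le_coatom K).resolve_left hK
  refine IsSupersoluble.mono ?_ hKM
  refine isSupersoluble_iff_ssResidual_eq_bot.2 (ssResidual_eq_bot_of_le_frattini M ?_)
  exact le_iInf₂ fun H hH => ssResidual_le_of_isCoatom_of_isKUSubnormal hH
    (h _ (isNMaximal_two_iff.2 ⟨M, hM, H, hH, rfl⟩))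

theorem exists_normal_lt_isMinimalNormal_map {G : Type*} [Group G] [Finite G] {R : Subgroup G}
    [hRn : R.Normal] (hR : R ≠ ⊥) (hmin : ¬ IsMinimalNormal R) :
    ∃ (N : Subgroup G) (_ : N.Normal), N ≠ ⊥ ∧ N < R ∧
      IsMinimalNormal (R.map (QuotientGroup.mk' N)) := by
  obtain ⟨T, hT, hTR, hT₀, hne⟩ :
      ∃ T : Subgroup G, T.Normal ∧ T ≤ R ∧ T ≠ ⊥ ∧ T ≠ R := by
    by_contra! hcon
    exact hmin ⟨hRn, hR, hcon⟩
  obtain ⟨N, hTN, ⟨hN, hNR⟩, hmax⟩ := (Set.toFinite {N : Subgroup G | N.Normal ∧ N < R}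
    ).exists_le_maximal (a := T) ⟨hT, lt_of_le_of_ne hTR hne⟩
  have hπ := QuotientGroup.mk'_surjective N
  refine ⟨N, hN, ne_bot_of_le_ne_bot hT₀ hTN, hNR, hRn.map _ hπ, ?_, fun L hL hLR hL₀ => ?_⟩
  · rw [Ne, Subgroup.map_eq_bot_iff, QuotientGroup.ker_mk']
    exact hNR.not_ge
  · have hle : L.comap (QuotientGroup.mk' N) ≤ R := by
      have := Subgroup.comap_mono (f := QuotientGroup.mk' N) hLR
      rwa [QuotientGroup.comap_map_mk', sup_eq_right.2 hNR.le] at this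
    have hmap := Subgroup.map_comap_eq_self_of_surjective hπ L
    by_contra hne
    have hLN := hmax ⟨hL.comap _, lt_of_le_of_ne hle fun h => hne (by rw [← hmap, h])⟩
      (QuotientGroup.le_comap_mk' N L)
    refine hL₀ (hmap ▸ (Subgroup.map_eq_bot_iff _).2 ?_)
    rwa [QuotientGroup.ker_mk']

variable {G : Type*} [Group G] [Finite G] {M N : Subgroup G} [N.Normal]

namespace IsMinimalNonsupersoluble

theorem ssResidual_ne_bot (hG : IsMinimalNonsupersoluble G) : ssResidual G ≠ ⊥ :=
  mt isSupersoluble_iff_ssResidual_eq_bot.2 hG.1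

theorem exists_isCoatom_not_ssResidual_le (hG : IsMinimalNonsupersoluble G) :
    ∃ M : Subgroup G, IsCoatom M ∧ ¬ ssResidual G ≤ M := by
  by_contra! hcon
  exact hG.ssResidual_ne_bot (ssResidual_eq_bot_of_le_frattini G (le_iInf₂ hcon))

theorem quotient (hG : IsMinimalNonsupersoluble G) (hN : ¬ ssResidual G ≤ N) :
    IsMinimalNonsupersoluble (G ⧸ N) :=
  ⟨mt isSupersoluble_quotient_iff_ssResidual_le.1 hN, forall_isSupersoluble_quotient hG.2⟩

theorem isPGroup_ssResidual (hG : IsMinimalNonsupersoluble G) (hN : N < ssResidual G)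
    {p k : ℕ} [Fact p.Prime] (h : N.relIndex (ssResidual G) = p ^ k) :
    IsPGroup p (ssResidual G) := by
  obtain ⟨P⟩ : Nonempty (Sylow p (ssResidual G)) := inferInstance
  set Q := (P : Subgroup (ssResidual G)).map (ssResidual G).subtype
  have hQ : Q.Normal := Subgroup.normalizer_eq_top_iff.1 <| by
    by_contra hne
    exact hN.not_ge (ssResidual_le_of_sup_eq_top (hG.2 _ hne)
      (normalizer_sylow_sup_eq_top_of_relIndex_eq_pow P h))
  obtain ⟨M, hM, hR⟩ := hG.exists_isCoatom_not_ssResidual_le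
  have le_of_not_le {L : Subgroup G} [L.Normal] (hL : ¬ L ≤ M) : ssResidual G ≤ L :=
    ssResidual_le_of_sup_eq_top (hG.2 M hM.1) (hM.2 _ (left_lt_sup.2 hL))
  have hNM : N ≤ M := by
    by_contra hNM
    exact hN.not_ge (le_of_not_le hNM)
  have hRQ : ssResidual G ≤ Q ⊔ N :=
    (map_subtype_sup_map_subtype (sylow_sup_eq_top_of_index_eq_pow P h)).ge.trans
      (sup_le_sup_left (Subgroup.map_comap_le _ _) _)
  exact (P.2.map _).to_le (le_of_not_le fun hQM => hR (hRQ.trans (sup_le hQM hNM)))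

end IsMinimalNonsupersoluble

theorem subgroupOf_le_frattini_of_forall_isKUSubnormal (hM : IsCoatom M) (hMs : IsSupersoluble M)
    (hR : ¬ ssResidual G ≤ M) (h : ∀ H : Subgroup G, IsNMaximal 2 H → IsKUSubnormal H)
    (hNM : N ≤ M) (hN : N ≤ ssResidual G) : N.subgroupOf M ≤ frattini M := by
  refine le_iInf₂ fun K (hK : IsCoatom K) => ?_
  by_contra hle
  have hKN : K.map M.subtype ⊔ N = M := by
    simpa only [Subgroup.map_subgroupOf_eq_of_le hNM] using
      map_subtype_sup_map_subtype (hK.2 _ (left_lt_sup.2 hle))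
  obtain ⟨L, hKL, hL, hLR⟩ := (h _ (isNMaximal_two_iff.2 ⟨M, hM, K, hK, rfl⟩)
    ).exists_le_normal_or_ssResidual_le ((map_subtype_lt hK.lt_top).trans_le le_top).ne
  have hRL : ssResidual G ≤ L := hLR.elim (fun hLn => ?_) id
  · refine hL (top_le_iff.1 ((hM.2 _ (left_lt_sup.2 hR)).ge.trans (sup_le ?_ hRL)))
    exact hKN.ge.trans (sup_le hKL (hN.trans hRL))
  · refine ssResidual_le_of_sup_eq_top hMs (hM.2 _ (left_lt_sup.2 fun hLM => hR ?_))
    have hLN : L ⊔ N = M := le_antisymm (sup_le hLM hNM) (hKN.ge.trans (sup_le_sup_right hKL N))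
    have : M.Normal := hLN ▸ inferInstance
    exact ssResidual_le_of_isCoatom hM

theorem IsMinimalNonsupersoluble.isSDH_of_forall_isKUSubnormal (hG : IsMinimalNonsupersoluble G)
    (h : ∀ H : Subgroup G, IsNMaximal 2 H → IsKUSubnormal H) : IsSDH G := by
  refine ⟨hG, ?_⟩
  by_contra hmin
  obtain ⟨N, _, hN₀, hNR, hV⟩ :=
    exists_normal_lt_isMinimalNormal_map hG.ssResidual_ne_bot hmin
  have hπ := QuotientGroup.mk'_surjective N
  rw [map_ssResidual_of_surjective hπ] at hV
  have hQ : IsSDH (G ⧸ N) := ⟨hG.quotient hNR.not_ge, hV⟩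
  obtain ⟨p, hp, hVp⟩ := hQ.exists_isPGroup_ssResidual
  have := Fact.mk hp
  obtain ⟨k, hk⟩ := IsPGroup.iff_card.1 hVp
  have hRp : IsPGroup p (ssResidual G) := hG.isPGroup_ssResidual hNR (k := k) <| by
    rw [← hk, ← map_ssResidual_of_surjective hπ, ← Subgroup.relIndex_ker, QuotientGroup.ker_mk']
  obtain ⟨M', hM', hVM'⟩ := hQ.1.exists_isCoatom_not_ssResidual_le
  set M := M'.comap (QuotientGroup.mk' N)
  have hM : IsCoatom M := Subgroup.isCoatom_comap_of_surjective hπ hM'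
  have hNM : N ≤ M := QuotientGroup.le_comap_mk' N M'
  have hRM : ¬ ssResidual G ≤ M := by
    rwa [← Subgroup.map_le_iff_le_comap, map_ssResidual_of_surjective hπ]
  have hindex : ¬ p ∣ N.relIndex M :=
    (relIndex_comap_mk' N M').symm ▸ hQ.not_dvd_card_of_isCoatom hVp hM' hVM'
  have hcard : ¬ p ∣ Nat.card (N.subgroupOf M) := not_dvd_card_of_le_frattini
    (subgroupOf_le_frattini_of_forall_isKUSubnormal hM (hG.2 M hM.1) hRM h hNM hNR.le) hindex
  rw [Nat.card_congr (Subgroup.subgroupOfEquivOfLe hNM).toEquiv] at hcard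
  exact hN₀ (Subgroup.card_eq_one.1 ((hRp.to_le hNR.le).card_eq_or_dvd.resolve_right hcard))

theorem IsSDH.isKUSubnormal (hG : IsSDH G) {H : Subgroup G} (hH : IsNMaximal 2 H) :
    IsKUSubnormal H := by
  obtain ⟨M, hM, K, hK, rfl⟩ := isNMaximal_two_iff.1 hH
  have hKM := map_subtype_lt hK.lt_top
  rw [isKUSubnormal_iff_reflTransGen]
  by_cases hR : ssResidual G ≤ M
  · exact .tail (.single (.of_isSupersoluble hKM.le (hG.1.2 M hM.1))) (kuStep_top_iff.2 (.inr hR))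
  · have hKR := hG.isSupersoluble_sup_ssResidual hM hR hKM
    exact .tail (.single (.of_isSupersoluble le_sup_left hKR))
      (kuStep_top_iff.2 (.inr le_sup_right))

end Minimality

/-- Every `2`-maximal subgroup of `G` is `K`-`𝔘`-subnormal in `G` if and only if
`G` is either supersoluble or an `SDH`-group. -/
theorem every_2maximal_KUsubnormal_iff (G : Type*) [Group G] [Finite G] :
    (∀ H : Subgroup G, IsNMaximal 2 H → IsKUSubnormal H) ↔
      IsSupersoluble G ∨ IsSDH G := by
  constructor
  · intro h
    refine or_iff_not_imp_left.2 fun hG => ?_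
    exact (isMinimalNonsupersoluble_of_forall_isKUSubnormal hG h).isSDH_of_forall_isKUSubnormal h
  · rintro (hG | hG) H hH
    · exact hG.isKUSubnormal H
    · exact hG.isKUSubnormal hH
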